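/- arXiv:2210.02066 — 2 statements merged into one kernel-verified Lean document; each statement's English description precedes it below -/
import Mathlib

section
/- For all p, q ∈ ℕ there exists a constant C > 0 such that for every r > 0 and every s ∈ (r, r+2): (i) |E_{p,q}(r,s)| ≤ C (s² − r²)^{1/2} (1+r)^{p+q−1/2} e^{−r(p/2 + q + 1/2)}; and (ii) |∂_s E_{p,q}(r,s)| ≤ C s (s² − r²)^{−1/2} (1+r)^{p+q−1/2} e^{−r(p/2 + q + 1/2)}. -/
/-!
The identity `cosh s - cosh r = 2 sinh ((s + r) / 2) sinh ((s - r) / 2)` factors the singularity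
of `E_{p,q}` explicitly. With `sinhc u = sinh u / u` and

`P s = (log sinhc ((s + r) / 2) + log sinhc ((s - r) / 2)) / 2 + q log sinhc s + p log sinhc (s / 2)`

one has `E_{p,q}(r, s) = (s² - r²)^{-1/2} √2 2^p (e^{-P s} - e^{-P r})` (`Efun_eq`).
The logarithmic derivative `cosh u / sinh u - 1 / u` of `sinhc` lies between `0` and `min 1 u`,
so that `0 ≤ P' s ≤ 2 κ s` with `κ = (p + q + 1) / (1 + r)` (`dphase_mem`). Integrating,
`0 ≤ P s - P r ≤ κ (s² - r²)`, whence `0 ≤ e^{-P r} - e^{-P s} ≤ κ (s² - r²) e^{-P r}`, and both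
estimates follow with `κ e^{-P r}` as the size factor. Finally `sinhc u ≥ e^u / (2 (1 + u))` bounds
`e^{-P r}` by a multiple of `(1 + r)^{p + q + 1/2} e^{-r (p/2 + q + 1/2)}` (`size_bound`).
-/

open Real MeasureTheory Filter Topology

noncomputable section

namespace DR

/-- The operator `𝓡 g (r) = (1 / sinh r) g'(r)`. -/
def Rop (g : ℝ → ℝ) : ℝ → ℝ := fun r => (1 / Real.sinh r) * deriv g r

/-- The operator `-(1 / sinh r) d/dr`. -/
def D1 (g : ℝ → ℝ) : ℝ → ℝ := fun r => -(1 / Real.sinh r) * deriv g r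

/-- The operator `-(1 / sinh (r/2)) d/dr`. -/
def D2 (g : ℝ → ℝ) : ℝ → ℝ := fun r => -(1 / Real.sinh (r / 2)) * deriv g r

/-- The Gaussian `e^{-r²/(4t)}`. -/
def gauss (t : ℝ) : ℝ → ℝ := fun r => Real.exp (-r ^ 2 / (4 * t))

/-- `Q = (μ + 2ν)/2`. -/
def Qc (μ ν : ℕ) : ℝ := ((μ : ℝ) + 2 * ν) / 2

/-- `c_k = 2^{-μ-ν/2-1-k} π^{-n/2}` with `n = μ+ν+1`. -/
def cc (μ ν k : ℕ) : ℝ :=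
  (2 : ℝ) ^ (-(μ : ℝ) - (ν : ℝ) / 2 - 1 - (k : ℝ)) *
    Real.pi ^ (-(((μ : ℝ) + ν + 1)) / 2)

/-- The Damek–Ricci heat kernel `h_t`. -/
def heat (μ ν : ℕ) (t : ℝ) : ℝ → ℝ := fun r =>
  if Even ν then
    cc μ ν 0 * t ^ (-(1 : ℝ) / 2) * Real.exp (-(Qc μ ν) ^ 2 * t / 4) *
      (D1^[ν / 2] (D2^[μ / 2] (gauss t))) r
  else
    cc μ ν 0 * Real.pi ^ (-(1 : ℝ) / 2) * t ^ (-(1 : ℝ) / 2) *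
      Real.exp (-(Qc μ ν) ^ 2 * t / 4) *
      ∫ s in Set.Ioi r, (Real.sinh s / Real.sqrt (Real.cosh s - Real.cosh r)) *
        (D1^[(ν + 1) / 2] (D2^[μ / 2] (gauss t))) s

/-- `Ψ_k(r,t)`. -/
def Psi (k : ℕ) (r t : ℝ) : ℝ :=
  if 1 < r ∨ Even k then (1 + 1 / Real.sqrt t + r / t) ^ k
  else r * (1 + 1 / Real.sqrt t + r / t) ^ (k - 1) * (1 + 1 / t)

/-- `Ψ̃_k(r,t)`. -/
def PsiT (k : ℕ) (r t : ℝ) : ℝ :=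
  if 1 < r ∨ Even k then (1 + 1 / Real.sqrt t + r / t) ^ k
  else (1 + 1 / Real.sqrt t + r / t) ^ (k - 1) * (1 + r / t)

/-- `p_{a,b}(r) = sinh^a r cosh^b r`. -/
def pab (a b : ℕ) (r : ℝ) : ℝ := Real.sinh r ^ a * Real.cosh r ^ b

/-- `Θ_{p,q}(r)` (with real exponents, via `rpow`). -/
def Theta (p q : ℝ) (r : ℝ) : ℝ :=
  ((r / (1 + r)) * (Real.exp (r / 2) / (2 * Real.sinh (r / 2)))) ^ p *
    ((r / (1 + 2 * r)) * (Real.exp r / Real.sinh r)) ^ q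

/-- Points of `S = ℝ^μ × ℝ^ν × (0,∞)` (the last coordinate ranges over `ℝ`;
statements are always restricted to `0 < a`). -/
abbrev Pt (μ ν : ℕ) := (Fin μ → ℝ) × (Fin ν → ℝ) × ℝ

/-- The quantity `((√a + 1/√a)/2 + |x|²/(8√a))² + |z|²/(4a)`, equal to `cosh²(r/2)`. -/
def coshExpr (μ ν : ℕ) (p : Pt μ ν) : ℝ :=
  ((Real.sqrt p.2.2 + (Real.sqrt p.2.2)⁻¹) / 2 +
      (Real.sqrt p.2.2)⁻¹ * (∑ i, p.1 i ^ 2) / 8) ^ 2 +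
    (p.2.2)⁻¹ * (∑ i, p.2.1 i ^ 2) / 4

/-- The vector field `X_0 = a ∂_a`. -/
def X0op (μ ν : ℕ) (f : Pt μ ν → ℝ) : Pt μ ν → ℝ :=
  fun p => p.2.2 * deriv (fun s => f (p.1, p.2.1, s)) p.2.2

/-- The vector fields `X_j`, `j ∈ {0, …, n-1}`, `n = μ+ν+1`:
`X_0 = a ∂_a`, `X_ℓ = √a (∂_{x_ℓ} + (1/2) Σ_k (J_k x, e_ℓ) ∂_{z_k})` for `ℓ = 1,…,μ`,
and `X_{μ+k} = a ∂_{z_k}` for `k = 1,…,ν`. -/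
def Xf (μ ν : ℕ) (Jm : Fin ν → Matrix (Fin μ) (Fin μ) ℝ) (j : Fin (μ + ν + 1))
    (f : Pt μ ν → ℝ) : Pt μ ν → ℝ := fun p =>
  if h0 : (j : ℕ) = 0 then p.2.2 * deriv (fun s => f (p.1, p.2.1, s)) p.2.2
  else if hm : (j : ℕ) ≤ μ then
    Real.sqrt p.2.2 *
      (deriv (fun s => f (Function.update p.1 ⟨(j : ℕ) - 1, by omega⟩ s, p.2.1, p.2.2))
          (p.1 ⟨(j : ℕ) - 1, by omega⟩) +
        (1 / 2) * ∑ k : Fin ν, (Jm k).mulVec p.1 ⟨(j : ℕ) - 1, by omega⟩ *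
          deriv (fun s => f (p.1, Function.update p.2.1 k s, p.2.2)) (p.2.1 k))
  else
    p.2.2 *
      deriv (fun s =>
          f (p.1, Function.update p.2.1 ⟨(j : ℕ) - μ - 1, by have := j.isLt; omega⟩ s, p.2.2))
        (p.2.1 ⟨(j : ℕ) - μ - 1, by have := j.isLt; omega⟩)

/-- `X_J = X_{J_1} X_{J_2} ⋯ X_{J_k}` for a multi-index `J`. -/
def XL (μ ν : ℕ) (Jm : Fin ν → Matrix (Fin μ) (Fin μ) ℝ) :
    List (Fin (μ + ν + 1)) → (Pt μ ν → ℝ) → Pt μ ν → ℝ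
  | [], f => f
  | j :: L, f => Xf μ ν Jm j (XL μ ν Jm L f)

/-- The function `E_{p,q}(r,s)`. -/
def Efun (p q : ℕ) (r s : ℝ) : ℝ :=
  (Real.sqrt (Real.cosh s - Real.cosh r))⁻¹ * (s / Real.sinh s) ^ q * (s / Real.sinh (s / 2)) ^ p -
    Real.sqrt 2 * (Real.sqrt (s ^ 2 - r ^ 2))⁻¹ * (r / Real.sinh r) ^ ((q : ℝ) + 1 / 2) *
      (r / Real.sinh (r / 2)) ^ p

/-! ### The logarithm of `sinh u / u` and its derivative -/

/-- The function `log (sinh u / u)`, extended continuously by `0` at `u = 0`: `dslope` supplies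
the value `sinh' 0 = 1` of the quotient at the origin. -/
def logSinhc (u : ℝ) : ℝ := Real.log (dslope Real.sinh 0 u)

lemma dslope_sinh_of_pos {u : ℝ} (hu : 0 < u) : dslope Real.sinh 0 u = Real.sinh u / u := by
  rw [dslope_of_ne _ hu.ne', slope_def_field]
  simp

lemma dslope_sinh_zero : dslope Real.sinh 0 0 = 1 := by
  simp [dslope_same]

lemma logSinhc_zero : logSinhc 0 = 0 := by
  simp [logSinhc]

lemma exp_logSinhc {u : ℝ} (hu : 0 < u) : Real.exp (logSinhc u) = Real.sinh u / u := by
  rw [logSinhc, dslope_sinh_of_pos hu, Real.exp_log (div_pos (Real.sinh_pos_iff.2 hu) hu)]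

lemma continuousAt_logSinhc {u : ℝ} (hu : 0 ≤ u) : ContinuousAt logSinhc u := by
  have hpos : dslope Real.sinh 0 u ≠ 0 := by
    rcases hu.eq_or_lt with h | h
    · rw [← h, dslope_sinh_zero]; norm_num
    · rw [dslope_sinh_of_pos h]
      exact (div_pos (Real.sinh_pos_iff.2 h) h).ne'
  refine ContinuousAt.log ?_ hpos
  rcases hu.eq_or_lt with h | h
  · rw [← h]
    exact continuousAt_dslope_same.2 Real.differentiable_sinh.differentiableAt
  · exact (continuousAt_dslope_of_ne h.ne').2 Real.continuous_sinh.continuousAt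

/-- The logarithmic derivative `coth u - 1 / u` of `sinh u / u`. -/
def dlogSinhc (u : ℝ) : ℝ := Real.cosh u / Real.sinh u - 1 / u

lemma hasDerivAt_logSinhc {u : ℝ} (hu : 0 < u) : HasDerivAt logSinhc (dlogSinhc u) u := by
  have hs := Real.sinh_pos_iff.2 hu
  have h1 : HasDerivAt (fun v => Real.log (Real.sinh v) - Real.log v) (dlogSinhc u) u := by
    have := ((Real.hasDerivAt_sinh u).log hs.ne').sub (Real.hasDerivAt_log hu.ne')
    exact this.congr_deriv (by rw [dlogSinhc, one_div])
  refine h1.congr_of_eventuallyEq ?_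
  filter_upwards [lt_mem_nhds hu] with v hv
  rw [logSinhc, dslope_sinh_of_pos hv, Real.log_div (Real.sinh_pos_iff.2 hv).ne' hv.ne']

lemma sinh_le_mul_cosh {u : ℝ} (hu : 0 ≤ u) : Real.sinh u ≤ u * Real.cosh u := by
  have hd : ∀ x : ℝ, HasDerivAt (fun x => x * Real.cosh x - Real.sinh x) (x * Real.sinh x) x := by
    intro x
    have := ((hasDerivAt_id x).mul (Real.hasDerivAt_cosh x)).sub (Real.hasDerivAt_sinh x)
    exact this.congr_deriv (by simp)
  have hm : MonotoneOn (fun x => x * Real.cosh x - Real.sinh x) (Set.Ici 0) := by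
    refine monotoneOn_of_deriv_nonneg (convex_Ici 0)
      (fun x _ => (hd x).continuousAt.continuousWithinAt)
      (fun x _ => (hd x).differentiableAt.differentiableWithinAt) ?_
    intro x hx
    rw [interior_Ici] at hx
    rw [(hd x).deriv]
    exact mul_nonneg (le_of_lt hx) (Real.sinh_nonneg_iff.2 (le_of_lt hx))
  have := hm (Set.mem_Ici.2 le_rfl) (Set.mem_Ici.2 hu) hu
  simp at this
  linarith

lemma mul_cosh_le {u : ℝ} (hu : 0 ≤ u) :
    u * Real.cosh u - Real.sinh u ≤ u ^ 2 * Real.sinh u := by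
  have hd : ∀ x : ℝ, HasDerivAt (fun x => x ^ 2 * Real.sinh x - (x * Real.cosh x - Real.sinh x))
      (x * Real.sinh x + x ^ 2 * Real.cosh x) x := by
    intro x
    have := ((hasDerivAt_pow 2 x).mul (Real.hasDerivAt_sinh x)).sub
      (((hasDerivAt_id x).mul (Real.hasDerivAt_cosh x)).sub (Real.hasDerivAt_sinh x))
    exact this.congr_deriv (by simp; ring)
  have hm : MonotoneOn (fun x => x ^ 2 * Real.sinh x - (x * Real.cosh x - Real.sinh x))
      (Set.Ici 0) := by
    refine monotoneOn_of_deriv_nonneg (convex_Ici 0)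
      (fun x _ => (hd x).continuousAt.continuousWithinAt)
      (fun x _ => (hd x).differentiableAt.differentiableWithinAt) ?_
    intro x hx
    rw [interior_Ici] at hx
    rw [(hd x).deriv]
    have h1 := mul_nonneg (le_of_lt hx) (Real.sinh_nonneg_iff.2 (le_of_lt hx))
    have h2 := mul_nonneg (sq_nonneg x) (Real.cosh_pos x).le
    linarith
  have := hm (Set.mem_Ici.2 le_rfl) (Set.mem_Ici.2 hu) hu
  simp at this
  linarith

lemma dlogSinhc_eq {u : ℝ} (hu : 0 < u) :
    dlogSinhc u = (u * Real.cosh u - Real.sinh u) / (u * Real.sinh u) := by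
  have hs := Real.sinh_pos_iff.2 hu
  rw [dlogSinhc]
  field_simp

lemma dlogSinhc_nonneg {u : ℝ} (hu : 0 < u) : 0 ≤ dlogSinhc u := by
  have hs := Real.sinh_pos_iff.2 hu
  rw [dlogSinhc_eq hu]
  exact div_nonneg (sub_nonneg.2 (sinh_le_mul_cosh hu.le)) (mul_pos hu hs).le

lemma dlogSinhc_le_self {u : ℝ} (hu : 0 < u) : dlogSinhc u ≤ u := by
  have hs := Real.sinh_pos_iff.2 hu
  rw [dlogSinhc_eq hu, div_le_iff₀ (mul_pos hu hs)]
  have := mul_cosh_le hu.le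
  nlinarith

lemma dlogSinhc_le_one {u : ℝ} (hu : 0 < u) : dlogSinhc u ≤ 1 := by
  have hs := Real.sinh_pos_iff.2 hu
  rw [dlogSinhc_eq hu, div_le_iff₀ (mul_pos hu hs)]
  have h1 : u ≤ Real.sinh u := Real.self_le_sinh_iff.2 hu.le
  have h2 : Real.exp (-u) ≤ 1 := Real.exp_le_one_iff.2 (by linarith)
  have h3 := Real.cosh_sub_sinh u
  nlinarith

lemma dlogSinhc_le {r s u : ℝ} (hr : 0 < r) (hrs : r < s) (hu : 0 < u) (hus : u ≤ s) :
    dlogSinhc u ≤ 2 * s / (1 + r) := by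
  rw [le_div_iff₀ (by linarith)]
  have h1 := dlogSinhc_le_one hu
  have h2 := dlogSinhc_le_self hu
  nlinarith

/-- The lower bound `sinh u / u ≥ e^u / (2 (1 + u))`, in logarithmic form. -/
lemma neg_logSinhc_le {u : ℝ} (hu : 0 < u) :
    -logSinhc u ≤ Real.log 2 + Real.log (1 + u) - u := by
  have hs := Real.sinh_pos_iff.2 hu
  rw [← Real.exp_le_exp, Real.exp_neg, exp_logSinhc hu, Real.exp_sub, Real.exp_add,
    Real.exp_log two_pos, Real.exp_log (by linarith : 0 < 1 + u), inv_div,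
    div_le_div_iff₀ hs (Real.exp_pos u)]
  have he := Real.exp_pos u
  have h1 : Real.exp u * Real.exp (-u) = 1 := by rw [← Real.exp_add]; simp
  -- `1 + 2 u ≤ e^{2 u}`, divided by `e^u`
  have h2 : (1 + 2 * u) * Real.exp (-u) ≤ Real.exp u := by
    have h3 : 2 * u + 1 ≤ Real.exp (2 * u) := Real.add_one_le_exp _
    have h4 : Real.exp (2 * u) = Real.exp u * Real.exp u := by rw [← Real.exp_add]; ring_nf
    have h5 := Real.exp_pos (-u)
    calc (1 + 2 * u) * Real.exp (-u) ≤ Real.exp u * Real.exp u * Real.exp (-u) := by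
          gcongr; linarith
      _ = Real.exp u := by rw [mul_assoc, h1, mul_one]
  rw [Real.sinh_eq]
  have h5 := Real.exp_pos (-u)
  nlinarith

/-! ### The phase and its growth -/

/-- The phase `P`: up to the constant `√2 2^p`, `e^{-P s}` is the regular factor
of the first term of `E_{p,q}(r, s)`. -/
def phase (p q : ℕ) (r s : ℝ) : ℝ :=
  (logSinhc ((s + r) / 2) + logSinhc ((s - r) / 2)) / 2 + q * logSinhc s + p * logSinhc (s / 2)

/-- The derivative of the phase in `s`. -/
def dphase (p q : ℕ) (r s : ℝ) : ℝ :=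
  (dlogSinhc ((s + r) / 2) * (1 / 2) + dlogSinhc ((s - r) / 2) * (1 / 2)) / 2 +
    q * dlogSinhc s + p * (dlogSinhc (s / 2) * (1 / 2))

lemma hasDerivAt_phase (p q : ℕ) {r s : ℝ} (hr : 0 < r) (hrs : r < s) :
    HasDerivAt (phase p q r) (dphase p q r s) s := by
  have h1 : HasDerivAt (fun v : ℝ => logSinhc ((v + r) / 2))
      (dlogSinhc ((s + r) / 2) * (1 / 2)) s :=
    HasDerivAt.comp (h₂ := logSinhc) s (hasDerivAt_logSinhc (by linarith))
      (((hasDerivAt_id s).add_const r).div_const 2)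
  have h2 : HasDerivAt (fun v : ℝ => logSinhc ((v - r) / 2))
      (dlogSinhc ((s - r) / 2) * (1 / 2)) s :=
    HasDerivAt.comp (h₂ := logSinhc) s (hasDerivAt_logSinhc (by linarith))
      (((hasDerivAt_id s).sub_const r).div_const 2)
  have h3 : HasDerivAt (fun v : ℝ => logSinhc (v / 2)) (dlogSinhc (s / 2) * (1 / 2)) s :=
    HasDerivAt.comp (h₂ := logSinhc) s (hasDerivAt_logSinhc (by linarith)) ((hasDerivAt_id s).div_const 2)
  exact (((h1.add h2).div_const 2).add
    ((hasDerivAt_logSinhc (hr.trans hrs)).const_mul (q : ℝ))).add (h3.const_mul (p : ℝ))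

lemma continuousOn_phase (p q : ℕ) {r : ℝ} (hr : 0 < r) :
    ContinuousOn (phase p q r) (Set.Ici r) := by
  intro s hs
  have hs' : r ≤ s := hs
  have h1 : ContinuousAt (fun v : ℝ => logSinhc ((v + r) / 2)) s :=
    ContinuousAt.comp (f := fun v : ℝ => (v + r) / 2)
      (continuousAt_logSinhc (by linarith)) (by fun_prop)
  have h2 : ContinuousAt (fun v : ℝ => logSinhc ((v - r) / 2)) s :=
    ContinuousAt.comp (f := fun v : ℝ => (v - r) / 2)
      (continuousAt_logSinhc (by linarith)) (by fun_prop)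
  have h3 : ContinuousAt (fun v : ℝ => logSinhc (v / 2)) s :=
    ContinuousAt.comp (f := fun v : ℝ => v / 2)
      (continuousAt_logSinhc (by linarith)) (by fun_prop)
  have h4 : ContinuousAt logSinhc s := continuousAt_logSinhc (by linarith)
  exact ((((h1.add h2).div_const 2).add (h4.const_mul (q : ℝ))).add
    (h3.const_mul (p : ℝ))).continuousWithinAt

/-- The key estimate: all arguments of `dlogSinhc` in `dphase` lie in `(0, s]`, so each
contributes at most `2 s / (1 + r)`. -/
lemma dphase_mem (p q : ℕ) {r s : ℝ} (hr : 0 < r) (hrs : r < s) :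
    0 ≤ dphase p q r s ∧ dphase p q r s ≤ 2 * (((p : ℝ) + q + 1) / (1 + r)) * s := by
  have hp : (0 : ℝ) ≤ p := p.cast_nonneg
  have hq : (0 : ℝ) ≤ q := q.cast_nonneg
  have a1 := dlogSinhc_nonneg (u := (s + r) / 2) (by linarith)
  have a2 := dlogSinhc_nonneg (u := (s - r) / 2) (by linarith)
  have a3 := dlogSinhc_nonneg (u := s) (by linarith)
  have a4 := dlogSinhc_nonneg (u := s / 2) (by linarith)
  have b1 := dlogSinhc_le (u := (s + r) / 2) hr hrs (by linarith) (by linarith)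
  have b2 := dlogSinhc_le (u := (s - r) / 2) hr hrs (by linarith) (by linarith)
  have b3 := dlogSinhc_le (u := s) hr hrs (by linarith) (by linarith)
  have b4 := dlogSinhc_le (u := s / 2) hr hrs (by linarith) (by linarith)
  have e : 2 * (((p : ℝ) + q + 1) / (1 + r)) * s = (p + q + 1) * (2 * s / (1 + r)) := by ring
  refine ⟨by unfold dphase; positivity, ?_⟩
  rw [e]
  have c3 := mul_le_mul_of_nonneg_left b3 hq
  have c4 := mul_le_mul_of_nonneg_left b4 hp
  have c5 := mul_nonneg hp a4
  unfold dphase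
  nlinarith

lemma phase_sub_mem (p q : ℕ) {r s : ℝ} (hr : 0 < r) (hrs : r < s) :
    0 ≤ phase p q r s - phase p q r r ∧
      phase p q r s - phase p q r r ≤ ((p : ℝ) + q + 1) / (1 + r) * (s ^ 2 - r ^ 2) := by
  set κ : ℝ := ((p : ℝ) + q + 1) / (1 + r) with hκ
  constructor
  · have hm : MonotoneOn (phase p q r) (Set.Ici r) := by
      refine monotoneOn_of_deriv_nonneg (convex_Ici r) (continuousOn_phase p q hr) ?_ ?_
      · intro x hx
        rw [interior_Ici] at hx
        exact (hasDerivAt_phase p q hr hx).differentiableAt.differentiableWithinAt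
      · intro x hx
        rw [interior_Ici] at hx
        rw [(hasDerivAt_phase p q hr hx).deriv]
        exact (dphase_mem p q hr hx).1
    exact sub_nonneg.2 (hm (Set.mem_Ici.2 le_rfl) (Set.mem_Ici.2 hrs.le) hrs.le)
  · have hd : ∀ x, r < x → HasDerivAt (fun x => κ * x ^ 2 - phase p q r x)
        (2 * κ * x - dphase p q r x) x := by
      intro x hx
      have := ((hasDerivAt_pow 2 x).const_mul κ).sub (hasDerivAt_phase p q hr hx)
      exact this.congr_deriv (by simp; ring)
    have hm : MonotoneOn (fun x => κ * x ^ 2 - phase p q r x) (Set.Ici r) := by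
      refine monotoneOn_of_deriv_nonneg (convex_Ici r)
        (ContinuousOn.sub (by fun_prop) (continuousOn_phase p q hr)) ?_ ?_
      · intro x hx
        rw [interior_Ici] at hx
        exact (hd x hx).differentiableAt.differentiableWithinAt
      · intro x hx
        rw [interior_Ici] at hx
        rw [(hd x hx).deriv]
        exact sub_nonneg.2 (dphase_mem p q hr hx).2
    have := hm (Set.mem_Ici.2 le_rfl) (Set.mem_Ici.2 hrs.le) hrs.le
    simp only at this
    linarith

/-! ### Factorization of `E_{p,q}` and the two estimates -/

lemma exp_neg_mul_logSinhc {u : ℝ} (hu : 0 < u) (x : ℝ) :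
    Real.exp (-(x * logSinhc u)) = (u / Real.sinh u) ^ x := by
  have hs := Real.sinh_pos_iff.2 hu
  rw [Real.rpow_def_of_pos (div_pos hu hs), logSinhc, dslope_sinh_of_pos hu,
    ← inv_div, Real.log_inv]
  congr 1
  ring

lemma exp_neg_natCast_mul_logSinhc {u : ℝ} (hu : 0 < u) (n : ℕ) :
    Real.exp (-(n * logSinhc u)) = (u / Real.sinh u) ^ n := by
  rw [exp_neg_mul_logSinhc hu, Real.rpow_natCast]

/-- The factorization of `cosh s - cosh r` through `sinh ((s ± r) / 2)`. -/
lemma inv_sqrt_cosh_sub {r s : ℝ} (hr : 0 < r) (hrs : r < s) :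
    (Real.sqrt (Real.cosh s - Real.cosh r))⁻¹ =
      (Real.sqrt (s ^ 2 - r ^ 2))⁻¹ *
        (Real.sqrt 2 * Real.exp (-((logSinhc ((s + r) / 2) + logSinhc ((s - r) / 2)) / 2))) := by
  have ha : 0 < (s + r) / 2 := by linarith
  have hb : 0 < (s - r) / 2 := by linarith
  have hsr : 0 < s ^ 2 - r ^ 2 := by nlinarith
  have h1 : Real.cosh s - Real.cosh r = 2 * (Real.sinh ((s + r) / 2) * Real.sinh ((s - r) / 2)) := by
    have e1 : s = (s + r) / 2 + (s - r) / 2 := by ring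
    have e2 : r = (s + r) / 2 - (s - r) / 2 := by ring
    conv_lhs => rw [e1, e2]
    rw [Real.cosh_add, Real.cosh_sub]
    ring_nf
  set l := logSinhc ((s + r) / 2) + logSinhc ((s - r) / 2) with hl
  have h2 : Real.exp l = Real.sinh ((s + r) / 2) / ((s + r) / 2) *
      (Real.sinh ((s - r) / 2) / ((s - r) / 2)) := by
    rw [hl, Real.exp_add, exp_logSinhc ha, exp_logSinhc hb]
  have h3 : Real.cosh s - Real.cosh r = (s ^ 2 - r ^ 2) * (Real.exp l / 2) := by
    have hs1 : s + r ≠ 0 := by linarith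
    have hs2 : s - r ≠ 0 := by linarith
    rw [h1, h2]
    field_simp
    ring
  have h4 : Real.sqrt (Real.exp l) = Real.exp (l / 2) := by
    rw [Real.exp_half]
  rw [h3, Real.sqrt_mul hsr.le, Real.sqrt_div (Real.exp_pos l).le, h4, Real.exp_neg, mul_inv,
    inv_div]
  rfl

lemma Efun_eq (p q : ℕ) {r s : ℝ} (hr : 0 < r) (hrs : r < s) :
    Efun p q r s = (Real.sqrt (s ^ 2 - r ^ 2))⁻¹ *
      (Real.sqrt 2 * 2 ^ p * (Real.exp (-phase p q r s) - Real.exp (-phase p q r r))) := by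
  have hs : 0 < s := hr.trans hrs
  have h1 : ∀ u : ℝ, (u / Real.sinh (u / 2)) = 2 * ((u / 2) / Real.sinh (u / 2)) := by
    intro u; ring
  have h2 : Real.exp (-phase p q r s) =
      Real.exp (-((logSinhc ((s + r) / 2) + logSinhc ((s - r) / 2)) / 2)) *
        (s / Real.sinh s) ^ q * (s / 2 / Real.sinh (s / 2)) ^ p := by
    rw [← exp_neg_natCast_mul_logSinhc hs, ← exp_neg_natCast_mul_logSinhc (half_pos hs),
      ← Real.exp_add, ← Real.exp_add, phase]
    congr 1
    ring
  have h3 : Real.exp (-phase p q r r) =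
      (r / Real.sinh r) ^ ((q : ℝ) + 1 / 2) * (r / 2 / Real.sinh (r / 2)) ^ p := by
    rw [← exp_neg_mul_logSinhc hr, ← exp_neg_natCast_mul_logSinhc (half_pos hr),
      ← Real.exp_add, phase, sub_self, zero_div, logSinhc_zero, add_self_div_two]
    congr 1
    ring
  rw [Efun, inv_sqrt_cosh_sub hr hrs, h1 s, h1 r, h2, h3, mul_pow, mul_pow]
  ring

/-- The factor `(p + q + 1) e^{-P r} / (1 + r)` governing both estimates has the asserted size. -/
lemma size_bound (p q : ℕ) {r : ℝ} (hr : 0 < r) :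
    ((p : ℝ) + q + 1) / (1 + r) * Real.exp (-phase p q r r) ≤
      ((p : ℝ) + q + 1) * Real.exp (((p : ℝ) + q + 1 / 2) * Real.log 2) *
        ((1 + r) ^ ((p : ℝ) + q - 1 / 2) * Real.exp (-r * ((p : ℝ) / 2 + q + 1 / 2))) := by
  have hp : (0 : ℝ) ≤ p := p.cast_nonneg
  have hq : (0 : ℝ) ≤ q := q.cast_nonneg
  have h1r : 0 < 1 + r := by linarith
  have hinv : 1 / (1 + r) = Real.exp (-Real.log (1 + r)) := by
    rw [Real.exp_neg, Real.exp_log h1r, one_div]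
  have hphase : phase p q r r = ((q : ℝ) + 1 / 2) * logSinhc r + p * logSinhc (r / 2) := by
    rw [phase, sub_self, zero_div, logSinhc_zero, add_self_div_two]
    ring
  have b1 := neg_logSinhc_le hr
  have b2 := neg_logSinhc_le (half_pos hr)
  have b3 : Real.log (1 + r / 2) ≤ Real.log (1 + r) :=
    Real.log_le_log (by linarith) (by linarith)
  have c1 := mul_le_mul_of_nonneg_left b1 (by linarith : (0 : ℝ) ≤ (q : ℝ) + 1 / 2)
  have c2 : (p : ℝ) * -logSinhc (r / 2) ≤ p * (Real.log 2 + Real.log (1 + r) - r / 2) :=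
    mul_le_mul_of_nonneg_left (by linarith) hp
  rw [div_eq_mul_one_div, hinv, Real.rpow_def_of_pos h1r, mul_assoc, mul_assoc]
  refine mul_le_mul_of_nonneg_left ?_ (by linarith)
  rw [← Real.exp_add, ← Real.exp_add, ← Real.exp_add, Real.exp_le_exp, hphase]
  linarith

theorem E_estimates (p q : ℕ) :
    ∃ C : ℝ, 0 < C ∧ ∀ r : ℝ, 0 < r → ∀ s ∈ Set.Ioo r (r + 2),
      |Efun p q r s| ≤
          C * Real.sqrt (s ^ 2 - r ^ 2) * (1 + r) ^ ((p : ℝ) + q - 1 / 2) *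
            Real.exp (-r * ((p : ℝ) / 2 + q + 1 / 2)) ∧
        |deriv (fun u => Efun p q r u) s| ≤
          C * s * (Real.sqrt (s ^ 2 - r ^ 2))⁻¹ * (1 + r) ^ ((p : ℝ) + q - 1 / 2) *
            Real.exp (-r * ((p : ℝ) / 2 + q + 1 / 2)) := by
  set B : ℝ := Real.sqrt 2 * 2 ^ p with hB
  set A : ℝ := ((p : ℝ) + q + 1) * Real.exp (((p : ℝ) + q + 1 / 2) * Real.log 2) with hA
  have hBpos : 0 < B := by positivity
  have hApos : 0 < A := by positivity
  refine ⟨3 * B * A, by positivity, ?_⟩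
  rintro r hr s ⟨hrs, -⟩
  have hs : 0 < s := hr.trans hrs
  have hsr : 0 < s ^ 2 - r ^ 2 := by nlinarith
  set w : ℝ := Real.sqrt (s ^ 2 - r ^ 2) with hw
  have hwpos : 0 < w := Real.sqrt_pos.2 hsr
  have hw2 : s ^ 2 - r ^ 2 = w ^ 2 := (Real.sq_sqrt hsr.le).symm
  set M : ℝ := (1 + r) ^ ((p : ℝ) + q - 1 / 2) * Real.exp (-r * ((p : ℝ) / 2 + q + 1 / 2)) with hM
  have hMpos : 0 < M := by positivity
  set κ : ℝ := ((p : ℝ) + q + 1) / (1 + r) with hκ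
  set g : ℝ := Real.exp (-phase p q r s) with hg
  set g₀ : ℝ := Real.exp (-phase p q r r) with hg₀
  have hgpos : 0 < g := Real.exp_pos _
  have hg₀pos : 0 < g₀ := Real.exp_pos _
  have hκpos : 0 < κ := by positivity
  have hsize : κ * g₀ ≤ A * M := size_bound p q hr
  obtain ⟨hP0, hP1⟩ := phase_sub_mem p q hr hrs
  have hle : g ≤ g₀ := Real.exp_le_exp.2 (by linarith)
  -- `1 - e^{-x} ≤ x` with `x = P s - P r`
  have hdiff : g₀ - g ≤ A * M * w ^ 2 := by
    have e1 : g = g₀ * Real.exp (-(phase p q r s - phase p q r r)) := by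
      rw [hg, hg₀, ← Real.exp_add]; congr 1; ring
    have e2 := Real.one_sub_le_exp_neg (phase p q r s - phase p q r r)
    calc g₀ - g = g₀ * (1 - Real.exp (-(phase p q r s - phase p q r r))) := by rw [e1]; ring
      _ ≤ g₀ * (κ * (s ^ 2 - r ^ 2)) := by gcongr; linarith
      _ = κ * g₀ * w ^ 2 := by rw [hw2]; ring
      _ ≤ A * M * w ^ 2 := by gcongr
  have habs : |g - g₀| ≤ A * M * w ^ 2 := by
    rw [abs_sub_comm, abs_of_nonneg (sub_nonneg.2 hle)]; exact hdiff
  constructor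
  · rw [Efun_eq p q hr hrs]
    calc |w⁻¹ * (B * (g - g₀))| = w⁻¹ * (B * |g - g₀|) := by
          rw [abs_mul, abs_mul, abs_of_pos hBpos, abs_of_pos (inv_pos.2 hwpos)]
      _ ≤ w⁻¹ * (B * (A * M * w ^ 2)) := by gcongr
      _ = 1 * (B * A * w * M) := by field_simp
      _ ≤ 3 * (B * A * w * M) := by gcongr; norm_num
      _ = _ := by rw [hM]; ring
  · have hd1 : HasDerivAt (fun u : ℝ => (Real.sqrt (u ^ 2 - r ^ 2))⁻¹) (-(s / w) / w ^ 2) s := by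
      have h := (((hasDerivAt_pow 2 s).sub_const (r ^ 2)).sqrt hsr.ne').inv hwpos.ne'
      refine h.congr_deriv ?_
      simp only [← hw]
      push_cast
      field_simp
    have hd2 : HasDerivAt (fun u : ℝ => B * (Real.exp (-phase p q r u) - g₀))
        (B * (g * -dphase p q r s)) s :=
      ((hasDerivAt_phase p q hr hrs).neg.exp.sub_const g₀).const_mul B
    have hd : HasDerivAt (fun u => Efun p q r u)
        (-(s / w) / w ^ 2 * (B * (g - g₀)) + w⁻¹ * (B * (g * -dphase p q r s))) s := by
      refine (hd1.mul hd2).congr_of_eventuallyEq ?_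
      filter_upwards [lt_mem_nhds hrs] with u hu
      exact Efun_eq p q hr hu
    obtain ⟨hQ0, hQ1⟩ := dphase_mem p q hr hrs
    have hQ : g * dphase p q r s ≤ 2 * (A * M) * s := by
      calc g * dphase p q r s ≤ g₀ * (2 * κ * s) := by gcongr
        _ = 2 * (κ * g₀) * s := by ring
        _ ≤ 2 * (A * M) * s := by gcongr
    rw [hd.deriv]
    have t1 : |-(s / w) / w ^ 2 * (B * (g - g₀))| ≤ B * A * M * s * w⁻¹ := by
      calc |-(s / w) / w ^ 2 * (B * (g - g₀))| = s / w / w ^ 2 * (B * |g - g₀|) := by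
            rw [abs_mul, abs_mul, abs_of_pos hBpos, abs_div, abs_neg,
              abs_of_pos (div_pos hs hwpos), abs_of_pos (pow_pos hwpos 2)]
        _ ≤ s / w / w ^ 2 * (B * (A * M * w ^ 2)) := by gcongr
        _ = B * A * M * s * w⁻¹ := by field_simp
    have t2 : |w⁻¹ * (B * (g * -dphase p q r s))| ≤ 2 * (B * A * M * s * w⁻¹) := by
      calc |w⁻¹ * (B * (g * -dphase p q r s))| = w⁻¹ * (B * (g * dphase p q r s)) := by
            rw [mul_neg g, mul_neg, mul_neg, abs_neg, abs_of_nonneg (by positivity)]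
        _ ≤ w⁻¹ * (B * (2 * (A * M) * s)) := by gcongr
        _ = 2 * (B * A * M * s * w⁻¹) := by ring
    calc _ ≤ _ := abs_add_le _ _
      _ ≤ B * A * M * s * w⁻¹ + 2 * (B * A * M * s * w⁻¹) := add_le_add t1 t2
      _ = _ := by rw [hM]; ring

end DR
end
end

section
/- Fix t > 0 and m, k ∈ ℕ. Then, as r → ∞, ∂^m/∂t^m ∂^k/∂r^k h_t(r) is asymptotically equivalent to (−1)^k c_{k+2m} t^{−1/2} e^{−Q²t/4} e^{−r²/(4t)} e^{−Qr/2} (r/t)^{μ/2 + ν/2 + k + 2m}; that is, the quotient of the two expressions tends to 1 as r → ∞. -/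
/-!
The kernel and its derivatives are written as superpositions of an explicit exponential weight times
a factor of polynomial growth, whose leading term is followed through every operation.

Call `g(u, r, w)` (time `u`, radius `r`, shift `w ≥ 0`) a symbol of degree `d` (`Symb d g`) if it is
built from smooth functions of `u`, from `r` and `w`, and from exponentials `e^{-(ar+cw)}` and
real powers of `1 - e^{-(ar+cw)}`, with polynomial growth of order `d` in `r + w`. The predicate
`Lead d A g` records in addition the leading term `A(u) (r+w)^d` as `r → ∞`, uniformly in `w ≥ 0`.
After conjugation by the weight `e^{-(r+w)²/(4u)} e^{-βr}`, differentiation in `r` or `u` preserves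
symbols, and to top order only the Gaussian is differentiated: `∂_r` turns `A` into `-A/(2u)` with
the degree raised by one, `∂_u` turns `A` into `A/(4u²)` with the degree raised by two
(`Lead.hasDerivAt_r`, `Lead.hasDerivAt_u`). In the same way `-(1/sinh(κr)) d/dr` raises the degree
by one, turns `A` into `A/u`, and increases the exponential rate by `κ` (`Lead.sinh_step`).

For even `ν` the kernel is therefore a weighted symbol at `w = 0`, of degree `(μ+ν)/2`. For odd `ν`,
put `s = r + w` in the integral: since `cosh(r+w) - cosh r = 2 sinh(r+w/2) sinh(w/2)`, the kernel
becomes a superposition of weighted symbols over `w > 0` with respect to the finite measure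
`e^{γw} (sinh(w/2))^{-1/2} dw`, `γ < 0`. Both cases are covered by `supInt l β g`, where `l` is the
Dirac mass at `0` or this measure. One may differentiate under the integral sign any number of
times (`supInt_iterate_r`, `supInt_iterate_u`), and what remains is the asymptotics of one such
superposition. For odd `ν` this is Watson's lemma (`tendsto_laplace_rho`): on the scale `w = v/r`
the weight tends to `e^{-v/(2t)}` and the density behaves like `(w/2)^{-1/2}`, which produces
`2 √(πt) r^{-1/2}`. The factors `-1/(2t)` and `1/(4t²)` per derivative account for the sign
`(-1)^k`, for the ratio `c_{k+2m}/c_0 = 2^{-k-2m}` and for the extra power `t^{-k-2m}`.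
-/

open Real MeasureTheory Filter Topology

noncomputable section

namespace DR

/-! ### Symbols in the radius and the shift -/

/-- `Symb d g` says that `g u r w` (time `u`, radius `r`, shift `w`) is a symbol of degree at most
`d` in `r + w`: it belongs to the graded algebra generated by smooth functions of `u`, by `r` and
`w` (degree one), and by the exponentials `e^{-(ar+cw)}` and the real powers of
`1 - e^{-(ar+cw)}` with `a > 0`, `c ≥ 0` (degree zero). The generators are chosen so that the
algebra is stable under `∂_u` and `∂_r`. -/
inductive Symb : ℕ → (ℝ → ℝ → ℝ → ℝ) → Prop
  | U (f : ℝ → ℝ) (hf : ContDiffOn ℝ (⊤ : ℕ∞) f (Set.Ioi 0)) : Symb 0 (fun u _ _ => f u)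
  | R : Symb 1 (fun _ r _ => r)
  | W : Symb 1 (fun _ _ w => w)
  | E (a c : ℝ) (ha : 0 < a) (hc : 0 ≤ c) : Symb 0 (fun _ r w => Real.exp (-(a * r + c * w)))
  | Y (a c p : ℝ) (ha : 0 < a) (hc : 0 ≤ c) :
      Symb 0 (fun _ r w => (1 - Real.exp (-(a * r + c * w))) ^ p)
  | add {d : ℕ} {f g : ℝ → ℝ → ℝ → ℝ} (hf : Symb d f) (hg : Symb d g) :
      Symb d (fun u r w => f u r w + g u r w)
  | mul {d e : ℕ} {f g : ℝ → ℝ → ℝ → ℝ} (hf : Symb d f) (hg : Symb e g) :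
      Symb (d + e) (fun u r w => f u r w * g u r w)
  | mono {d e : ℕ} {f : ℝ → ℝ → ℝ → ℝ} (hf : Symb d f) (h : d ≤ e) : Symb e f

namespace Symb

theorem const (c : ℝ) : Symb 0 (fun _ _ _ => c) := Symb.U (fun _ => c) contDiffOn_const

theorem zero (d : ℕ) : Symb d (fun _ _ _ => 0) := (const 0).mono (Nat.zero_le d)

theorem cmul {d : ℕ} {g : ℝ → ℝ → ℝ → ℝ} (c : ℝ) (hg : Symb d g) :
    Symb d (fun u r w => c * g u r w) := by
  simpa using (const c).mul hg

theorem umul {d : ℕ} {g : ℝ → ℝ → ℝ → ℝ} {f : ℝ → ℝ}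
    (hf : ContDiffOn ℝ (⊤ : ℕ∞) f (Set.Ioi 0)) (hg : Symb d g) :
    Symb d (fun u r w => f u * g u r w) := by
  simpa using (Symb.U f hf).mul hg

theorem mul0 {d : ℕ} {f g : ℝ → ℝ → ℝ → ℝ} (hf : Symb 0 f) (hg : Symb d g) :
    Symb d (fun u r w => f u r w * g u r w) := by
  simpa using hf.mul hg

theorem RW : Symb 1 (fun _ r w => r + w) := Symb.R.add Symb.W

theorem measurable {d : ℕ} {g : ℝ → ℝ → ℝ → ℝ} (hg : Symb d g) (u r : ℝ) :
    Measurable (fun w => g u r w) := by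
  induction hg with
  | U f hf => exact measurable_const
  | R => exact measurable_const
  | W => exact measurable_id
  | E a c ha hc => fun_prop
  | Y a c p ha hc => fun_prop
  | add hf hg h1 h2 => exact h1.add h2
  | mul hf hg h1 h2 => exact h1.mul h2
  | mono hf h h1 => exact h1

/-- The substitution `r ↦ r + w`, `w ↦ 0` preserves symbols. -/
theorem shift {d : ℕ} {g : ℝ → ℝ → ℝ → ℝ} (hg : Symb d g) :
    Symb d (fun u r w => g u (r + w) 0) := by
  induction hg with
  | U f hf => exact Symb.U f hf
  | R => exact RW
  | W => exact zero 1
  | E a c ha hc =>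
    have h := Symb.E a a ha ha.le
    simpa [mul_add] using h
  | Y a c p ha hc =>
    have h := Symb.Y a a p ha ha.le
    simpa [mul_add] using h
  | add hf hg h1 h2 => exact h1.add h2
  | mul hf hg h1 h2 => exact h1.mul h2
  | mono hf h h1 => exact h1.mono h

/-- Polynomial growth of symbols, locally uniformly in time. Away from `r = 0` the powers of
`1 - e^{-(ar+cw)}` are bounded, whence the restriction to `r ≥ 1`. -/
theorem bound {d : ℕ} {g : ℝ → ℝ → ℝ → ℝ} (hg : Symb d g) {a b : ℝ} (ha : 0 < a) :
    ∃ C : ℝ, 0 ≤ C ∧ ∀ u ∈ Set.Icc a b, ∀ r : ℝ, 1 ≤ r → ∀ w : ℝ, 0 ≤ w →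
      |g u r w| ≤ C * (r + w) ^ d := by
  induction hg with
  | U f hf =>
    have hc : ContinuousOn f (Set.Icc a b) :=
      hf.continuousOn.mono (fun x hx => lt_of_lt_of_le ha hx.1)
    obtain ⟨C, hC⟩ := isCompact_Icc.exists_bound_of_continuousOn hc
    refine ⟨max C 0, le_max_right _ _, fun u hu r hr w hw => ?_⟩
    simpa using Or.inl (hC u hu)
  | R =>
    refine ⟨1, zero_le_one, fun u hu r hr w hw => ?_⟩
    rw [abs_of_nonneg (by linarith)]; linarith
  | W =>
    refine ⟨1, zero_le_one, fun u hu r hr w hw => ?_⟩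
    rw [abs_of_nonneg (by linarith)]; linarith
  | E p c hp hc =>
    refine ⟨1, zero_le_one, fun u hu r hr w hw => ?_⟩
    have : 0 ≤ p * r + c * w := by positivity
    rw [abs_of_pos (Real.exp_pos _), pow_zero, mul_one, Real.exp_le_one_iff]
    linarith
  | Y p c q hp hc =>
    have h0 : 0 < 1 - Real.exp (-p) := by simpa using hp
    have hcont : ContinuousOn (fun x : ℝ => x ^ q) (Set.Icc (1 - Real.exp (-p)) 1) := by
      intro x hx
      exact (Real.continuousAt_rpow_const x q
        (Or.inl (lt_of_lt_of_le h0 hx.1).ne')).continuousWithinAt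
    obtain ⟨C, hC⟩ := isCompact_Icc.exists_bound_of_continuousOn hcont
    refine ⟨max C 0, le_max_right _ _, fun u hu r hr w hw => ?_⟩
    have h1 : Real.exp (-(p * r + c * w)) ≤ Real.exp (-p) := by
      apply Real.exp_le_exp.2
      nlinarith [mul_nonneg hc hw]
    have := hC (1 - Real.exp (-(p * r + c * w)))
      ⟨by linarith, by linarith [Real.exp_pos (-(p * r + c * w))]⟩
    simpa using Or.inl this
  | @add d f g hf hg h1 h2 =>
    obtain ⟨C1, hC1, H1⟩ := h1
    obtain ⟨C2, hC2, H2⟩ := h2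
    refine ⟨C1 + C2, by positivity, fun u hu r hr w hw => ?_⟩
    calc _ ≤ _ := abs_add_le _ _
      _ ≤ _ := add_le_add (H1 u hu r hr w hw) (H2 u hu r hr w hw)
      _ = _ := by ring
  | @mul d e f g hf hg h1 h2 =>
    obtain ⟨C1, hC1, H1⟩ := h1
    obtain ⟨C2, hC2, H2⟩ := h2
    refine ⟨C1 * C2, by positivity, fun u hu r hr w hw => ?_⟩
    have hs : 0 ≤ r + w := by linarith
    calc _ = |f u r w| * |g u r w| := abs_mul _ _
      _ ≤ (C1 * (r + w) ^ d) * (C2 * (r + w) ^ e) :=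
        mul_le_mul (H1 u hu r hr w hw) (H2 u hu r hr w hw) (abs_nonneg _) (by positivity)
      _ = _ := by ring
  | @mono d e f hf h h1 =>
    obtain ⟨C1, hC1, H1⟩ := h1
    refine ⟨C1, hC1, fun u hu r hr w hw => (H1 u hu r hr w hw).trans ?_⟩
    exact mul_le_mul_of_nonneg_left (pow_le_pow_right₀ (by linarith) h) hC1

theorem hasDerivAt_r {d : ℕ} {g : ℝ → ℝ → ℝ → ℝ} (hg : Symb d g) :
    ∃ g' : ℝ → ℝ → ℝ → ℝ, Symb d g' ∧ ∀ u r w : ℝ, 0 < u → 0 < r → 0 ≤ w →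
      HasDerivAt (fun r => g u r w) (g' u r w) r := by
  induction hg with
  | U f hf => exact ⟨_, zero 0, fun u r w hu hr hw => hasDerivAt_const _ _⟩
  | R => exact ⟨_, (const 1).mono zero_le_one, fun u r w hu hr hw => hasDerivAt_id r⟩
  | W => exact ⟨_, zero 1, fun u r w hu hr hw => hasDerivAt_const _ _⟩
  | E a c ha hc =>
    refine ⟨_, (Symb.E a c ha hc).cmul (-a), fun u r w hu hr hw => ?_⟩
    have h : HasDerivAt (fun r => -(a * r + c * w)) (-a) r := by
      simpa only [mul_one] using (((hasDerivAt_id' r).const_mul a).add_const (c * w)).fun_neg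
    convert! h.exp using 1
    ring
  | Y a c p ha hc =>
    refine ⟨_, ((Symb.E a c ha hc).mul0 (Symb.Y a c (p - 1) ha hc)).cmul (p * a),
      fun u r w hu hr hw => ?_⟩
    have h : HasDerivAt (fun r => -(a * r + c * w)) (-a) r := by
      simpa only [mul_one] using (((hasDerivAt_id' r).const_mul a).add_const (c * w)).fun_neg
    have hpos : 0 < a * r + c * w := by positivity
    have hne : 1 - Real.exp (-(a * r + c * w)) ≠ 0 := by
      have : Real.exp (-(a * r + c * w)) < 1 := by
        rw [Real.exp_lt_one_iff]; linarith
      linarith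
    convert! (h.exp.const_sub 1).rpow_const (p := p) (Or.inl hne) using 1
    ring
  | add hf hg h1 h2 =>
    obtain ⟨f', hf', H1⟩ := h1
    obtain ⟨g', hg', H2⟩ := h2
    exact ⟨_, hf'.add hg', fun u r w hu hr hw => (H1 u r w hu hr hw).add (H2 u r w hu hr hw)⟩
  | mul hf hg h1 h2 =>
    obtain ⟨f', hf', H1⟩ := h1
    obtain ⟨g', hg', H2⟩ := h2
    exact ⟨_, (hf'.mul hg).add (hf.mul hg'),
      fun u r w hu hr hw => (H1 u r w hu hr hw).mul (H2 u r w hu hr hw)⟩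
  | mono hf h h1 =>
    obtain ⟨f', hf', H1⟩ := h1
    exact ⟨f', hf'.mono h, H1⟩

theorem hasDerivAt_u {d : ℕ} {g : ℝ → ℝ → ℝ → ℝ} (hg : Symb d g) :
    ∃ g' : ℝ → ℝ → ℝ → ℝ, Symb d g' ∧ ∀ u r w : ℝ, 0 < u → 0 < r → 0 ≤ w →
      HasDerivAt (fun u => g u r w) (g' u r w) u := by
  induction hg with
  | U f hf =>
    refine ⟨_, Symb.U (deriv f) (hf.deriv_of_isOpen isOpen_Ioi (by simp)),
      fun u r w hu hr hw => ?_⟩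
    exact ((hf.differentiableOn (by simp)).differentiableAt (Ioi_mem_nhds hu)).hasDerivAt
  | R => exact ⟨_, zero 1, fun u r w hu hr hw => hasDerivAt_const _ _⟩
  | W => exact ⟨_, zero 1, fun u r w hu hr hw => hasDerivAt_const _ _⟩
  | E a c ha hc => exact ⟨_, zero 0, fun u r w hu hr hw => hasDerivAt_const _ _⟩
  | Y a c p ha hc => exact ⟨_, zero 0, fun u r w hu hr hw => hasDerivAt_const _ _⟩
  | add hf hg h1 h2 =>
    obtain ⟨f', hf', H1⟩ := h1
    obtain ⟨g', hg', H2⟩ := h2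
    exact ⟨_, hf'.add hg', fun u r w hu hr hw => (H1 u r w hu hr hw).add (H2 u r w hu hr hw)⟩
  | mul hf hg h1 h2 =>
    obtain ⟨f', hf', H1⟩ := h1
    obtain ⟨g', hg', H2⟩ := h2
    exact ⟨_, (hf'.mul hg).add (hf.mul hg'),
      fun u r w hu hr hw => (H1 u r w hu hr hw).mul (H2 u r w hu hr hw)⟩
  | mono hf h h1 =>
    obtain ⟨f', hf', H1⟩ := h1
    exact ⟨f', hf'.mono h, H1⟩

end Symb

/-! ### Leading terms and the exponential weight -/

/-- `r → ∞` uniformly in the shift `w ≥ 0`, as a filter on pairs `(r, w)`. -/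
def unifAtTop : Filter (ℝ × ℝ) := Filter.atTop ×ˢ Filter.principal (Set.Ici 0)

/-- `Lead d A g`: the symbol `g` has degree at most `d` and leading term `A(u) (r+w)^d` as
`r → ∞`, uniformly in `w ≥ 0`. -/
def Lead (d : ℕ) (A : ℝ → ℝ) (g : ℝ → ℝ → ℝ → ℝ) : Prop :=
  Symb d g ∧ ∀ u : ℝ, 0 < u →
    Tendsto (fun p : ℝ × ℝ => g u p.1 p.2 / (p.1 + p.2) ^ d) unifAtTop (𝓝 (A u))

theorem eventually_unifAtTop (R : ℝ) : ∀ᶠ p in unifAtTop, R ≤ p.1 ∧ 0 ≤ p.2 := by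
  have h1 : ∀ᶠ r : ℝ in atTop, R ≤ r := eventually_ge_atTop R
  have h2 : ∀ᶠ w : ℝ in 𝓟 (Set.Ici (0 : ℝ)), 0 ≤ w := eventually_principal.2 fun w hw => hw
  exact (h1.prod_inl _).and (h2.prod_inr _)

theorem tendsto_add_unifAtTop : Tendsto (fun p : ℝ × ℝ => p.1 + p.2) unifAtTop atTop := by
  refine tendsto_atTop_mono' _ ?_ (tendsto_fst : Tendsto Prod.fst unifAtTop atTop)
  filter_upwards [eventually_unifAtTop 0] with p hp
  linarith [hp.2]

namespace Lead

/-- A symbol of degree `d` has leading term `0` when regarded as a symbol of degree `d + 1`. -/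
theorem of_symb {d : ℕ} {g : ℝ → ℝ → ℝ → ℝ} (hg : Symb d g) : Lead (d + 1) (fun _ => 0) g := by
  refine ⟨hg.mono (Nat.le_succ d), fun u hu => ?_⟩
  obtain ⟨C, hC, H⟩ := hg.bound (a := u) (b := u) hu
  have hlim : Tendsto (fun p : ℝ × ℝ => C * (p.1 + p.2)⁻¹) unifAtTop (𝓝 0) := by
    simpa using (tendsto_inv_atTop_zero.comp tendsto_add_unifAtTop).const_mul C
  refine squeeze_zero_norm' ?_ hlim
  filter_upwards [eventually_unifAtTop 1] with p hp
  have hs : 0 < p.1 + p.2 := by linarith [hp.1, hp.2]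
  have := H u ⟨le_rfl, le_rfl⟩ p.1 hp.1 p.2 hp.2
  rw [Real.norm_eq_abs, abs_div, abs_of_pos (pow_pos hs _), div_le_iff₀ (pow_pos hs _)]
  refine this.trans (le_of_eq ?_)
  field_simp
  ring

theorem succ {d : ℕ} {A : ℝ → ℝ} {g : ℝ → ℝ → ℝ → ℝ} (hg : Lead d A g) :
    Lead (d + 1) (fun _ => 0) g := of_symb hg.1

theorem add {d : ℕ} {A B : ℝ → ℝ} {f g : ℝ → ℝ → ℝ → ℝ} (hf : Lead d A f) (hg : Lead d B g) :
    Lead d (fun u => A u + B u) (fun u r w => f u r w + g u r w) := by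
  refine ⟨hf.1.add hg.1, fun u hu => ?_⟩
  refine ((hf.2 u hu).add (hg.2 u hu)).congr fun p => ?_
  exact (add_div _ _ _).symm

theorem mul {d e : ℕ} {A B : ℝ → ℝ} {f g : ℝ → ℝ → ℝ → ℝ} (hf : Lead d A f) (hg : Lead e B g) :
    Lead (d + e) (fun u => A u * B u) (fun u r w => f u r w * g u r w) := by
  refine ⟨hf.1.mul hg.1, fun u hu => ?_⟩
  refine ((hf.2 u hu).mul (hg.2 u hu)).congr fun p => ?_
  rw [div_mul_div_comm, pow_add]

theorem U {f : ℝ → ℝ} (hf : ContDiffOn ℝ (⊤ : ℕ∞) f (Set.Ioi 0)) :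
    Lead 0 f (fun u _ _ => f u) :=
  ⟨Symb.U f hf, fun u _ => by simpa using tendsto_const_nhds⟩

theorem RW : Lead 1 (fun _ => 1) (fun _ r w => r + w) := by
  refine ⟨Symb.RW, fun u _ => tendsto_const_nhds.congr' ?_⟩
  filter_upwards [eventually_unifAtTop 1] with p hp
  have hs : p.1 + p.2 ≠ 0 := by linarith [hp.1, hp.2]
  simp [hs]

theorem Y (a c p : ℝ) (ha : 0 < a) (hc : 0 ≤ c) :
    Lead 0 (fun _ => 1) (fun _ r w => (1 - Real.exp (-(a * r + c * w))) ^ p) := by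
  refine ⟨Symb.Y a c p ha hc, fun u _ => ?_⟩
  have h1 : Tendsto (fun q : ℝ × ℝ => a * q.1 + c * q.2) unifAtTop atTop := by
    refine tendsto_atTop_mono' _ ?_
      ((tendsto_fst : Tendsto Prod.fst unifAtTop atTop).const_mul_atTop ha)
    filter_upwards [eventually_unifAtTop 0] with q hq
    linarith [mul_nonneg hc hq.2]
  have h2 : Tendsto (fun q : ℝ × ℝ => 1 - Real.exp (-(a * q.1 + c * q.2))) unifAtTop (𝓝 1) := by
    simpa using (Real.tendsto_exp_neg_atTop_nhds_zero.comp h1).const_sub 1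
  simpa using h2.rpow_const (p := p) (Or.inl one_ne_zero)

theorem umul {d : ℕ} {A f : ℝ → ℝ} {g : ℝ → ℝ → ℝ → ℝ} (hg : Lead d A g)
    (hf : ContDiffOn ℝ (⊤ : ℕ∞) f (Set.Ioi 0)) :
    Lead d (fun u => f u * A u) (fun u r w => f u * g u r w) := by
  simpa using (U hf).mul hg

theorem mul0 {d : ℕ} {A B : ℝ → ℝ} {f g : ℝ → ℝ → ℝ → ℝ} (hf : Lead 0 A f) (hg : Lead d B g) :
    Lead d (fun u => A u * B u) (fun u r w => f u r w * g u r w) := by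
  simpa using hf.mul hg

theorem congr {d : ℕ} {A B : ℝ → ℝ} {g : ℝ → ℝ → ℝ → ℝ} (hg : Lead d A g)
    (h : ∀ u, 0 < u → A u = B u) : Lead d B g :=
  ⟨hg.1, fun u hu => h u hu ▸ hg.2 u hu⟩

theorem shift {d : ℕ} {A : ℝ → ℝ} {g : ℝ → ℝ → ℝ → ℝ} (hg : Lead d A g) :
    Lead d A (fun u r w => g u (r + w) 0) := by
  refine ⟨hg.1.shift, fun u hu => ?_⟩
  have h : Tendsto (fun p : ℝ × ℝ => (p.1 + p.2, (0 : ℝ))) unifAtTop unifAtTop :=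
    tendsto_add_unifAtTop.prodMk (tendsto_principal.2 (by simp))
  simpa [Function.comp_def] using (hg.2 u hu).comp h

end Lead

theorem contDiffOn_cinv (c : ℝ) : ContDiffOn ℝ (⊤ : ℕ∞) (fun u : ℝ => c / u) (Set.Ioi 0) :=
  contDiffOn_const.div contDiffOn_id fun _ hu => (Set.mem_Ioi.1 hu).ne'

/-- The weight `e^{-(r+w)²/(4u)} e^{-βr}` carrying the exponential decay of the integrands. -/
def wt (β u r w : ℝ) : ℝ := Real.exp (-(r + w) ^ 2 / (4 * u)) * Real.exp (-β * r)

/-- Conjugated by the weight, `∂_r` raises the degree by one and multiplies the leading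
coefficient by `-1/(2u)`: only the derivative of the Gaussian contributes to top order. -/
theorem Lead.hasDerivAt_r {d : ℕ} {A : ℝ → ℝ} {g : ℝ → ℝ → ℝ → ℝ} (hg : Lead d A g) (β : ℝ) :
    ∃ g' : ℝ → ℝ → ℝ → ℝ, Lead (d + 1) (fun u => -1 / 2 / u * A u) g' ∧
      ∀ u r w : ℝ, 0 < u → 0 < r → 0 ≤ w →
        HasDerivAt (fun r => wt β u r w * g u r w) (wt β u r w * g' u r w) r := by
  obtain ⟨g₁, hg₁, H⟩ := hg.1.hasDerivAt_r
  have hL := ((Lead.of_symb hg₁).add (Lead.of_symb (hg.1.cmul (-β)))).add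
    ((hg.mul Lead.RW).umul (contDiffOn_cinv (-1 / 2)))
  refine ⟨_, hL.congr fun u hu => by ring, fun u r w hu hr hw => ?_⟩
  have h1 : HasDerivAt (fun r : ℝ => -(r + w) ^ 2 / (4 * u)) (-(2 * (r + w)) / (4 * u)) r := by
    have := ((((hasDerivAt_id' r).add_const w).pow 2).neg).div_const (4 * u)
    convert! this using 1
    simp
  have h2 : HasDerivAt (fun r : ℝ => -β * r) (-β) r := by
    simpa using (hasDerivAt_id r).const_mul (-β)
  have h3 := (h1.exp.mul h2.exp).mul (H u r w hu hr hw)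
  convert! h3 using 1
  simp only [wt, Pi.mul_apply]
  field_simp
  ring

/-- Conjugated by the weight, `∂_u` raises the degree by two and multiplies the leading
coefficient by `1/(4u²)`. -/
theorem Lead.hasDerivAt_u {d : ℕ} {A : ℝ → ℝ} {g : ℝ → ℝ → ℝ → ℝ} (hg : Lead d A g) (β : ℝ) :
    ∃ g' : ℝ → ℝ → ℝ → ℝ, Lead (d + 2) (fun u => 1 / 4 / u / u * A u) g' ∧
      ∀ u r w : ℝ, 0 < u → 0 < r → 0 ≤ w →
        HasDerivAt (fun u => wt β u r w * g u r w) (wt β u r w * g' u r w) u := by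
  obtain ⟨g₁, hg₁, H⟩ := hg.1.hasDerivAt_u
  have hc : ContDiffOn ℝ (⊤ : ℕ∞) (fun u : ℝ => 1 / 4 / u / u) (Set.Ioi 0) :=
    (contDiffOn_cinv (1 / 4)).div contDiffOn_id fun _ hu => (Set.mem_Ioi.1 hu).ne'
  have hL := (Lead.of_symb hg₁).succ.add (((hg.mul Lead.RW).mul Lead.RW).umul hc)
  refine ⟨_, hL.congr fun u hu => by simp, fun u r w hu hr hw => ?_⟩
  have h1 : HasDerivAt (fun u : ℝ => -(r + w) ^ 2 / (4 * u)) ((r + w) ^ 2 / (4 * u ^ 2)) u := by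
    have := (hasDerivAt_const u (-(r + w) ^ 2)).div ((hasDerivAt_id' u).const_mul 4) (by positivity)
    convert! this using 1
    field_simp
    ring
  have h3 := (h1.exp.mul_const (Real.exp (-β * r))).mul (H u r w hu hr hw)
  convert! h3 using 1
  simp only [wt]
  field_simp
  ring

/-! ### Iterated operators and superpositions -/

theorem inv_sinh_eq {x : ℝ} (hx : 0 < x) :
    1 / Real.sinh x = 2 * Real.exp (-x) * (1 - Real.exp (-(2 * x))) ^ (-1 : ℝ) := by
  have h1 : Real.exp (-(2 * x)) < 1 := by rw [Real.exp_lt_one_iff]; linarith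
  have h2 : Real.sinh x = Real.exp x * (1 - Real.exp (-(2 * x))) / 2 := by
    rw [Real.sinh_eq, mul_sub, ← Real.exp_add]; ring_nf
  have h3 : (1 - Real.exp (-(2 * x))) ≠ 0 := by linarith
  rw [Real.rpow_neg_one, h2, Real.exp_neg x]
  field_simp

/-- One application of `-(1/sinh(κr)) d/dr` shifts the exponential rate by `κ`, raises the degree
by one, and divides the leading coefficient by `u`. -/
theorem Lead.sinh_step {d : ℕ} {A : ℝ → ℝ} {g : ℝ → ℝ → ℝ → ℝ} (hg : Lead d A g)
    {F : ℝ → ℝ → ℝ} {κ b : ℝ} (hκ : 0 < κ)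
    (hF : ∀ u r, 0 < u → 0 < r → F u r = wt b u r 0 * g u r 0) :
    ∃ g' : ℝ → ℝ → ℝ → ℝ, Lead (d + 1) (fun u => 1 / u * A u) g' ∧
      ∀ u r, 0 < u → 0 < r →
        -(1 / Real.sinh (κ * r)) * deriv (F u) r = wt (b + κ) u r 0 * g' u r 0 := by
  obtain ⟨g₁, hg₁, H⟩ := hg.hasDerivAt_r b
  have hL := ((Lead.Y (2 * κ) 0 (-1) (by positivity) le_rfl).mul0 hg₁).umul
    (contDiffOn_const (c := (-2 : ℝ)))
  refine ⟨_, hL.congr fun u hu => by ring, fun u r hu hr => ?_⟩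
  have hd : deriv (F u) r = wt b u r 0 * g₁ u r 0 := by
    refine HasDerivAt.deriv ((H u r 0 hu hr le_rfl).congr_of_eventuallyEq ?_)
    filter_upwards [Ioi_mem_nhds hr] with x hx
    exact hF u x hu hx
  rw [hd, inv_sinh_eq (by positivity), wt, wt]
  have : Real.exp (-(b + κ) * r) = Real.exp (-b * r) * Real.exp (-(κ * r)) := by
    rw [← Real.exp_add]; ring_nf
  rw [this]
  ring_nf

/-- `D1^{j₁} D2^{j₂}` applied to the Gaussian: exponential decay at rate `j₁ + j₂/2`, with
polynomial factor `(r/u)^{j₁+j₂}` to leading order. -/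
theorem exists_lead_iterate (j₁ j₂ : ℕ) :
    ∃ P : ℝ → ℝ → ℝ → ℝ, Lead (j₂ + j₁) (fun u => (1 / u) ^ (j₂ + j₁)) P ∧
      ∀ u r, 0 < u → 0 < r →
        (D1^[j₁] (D2^[j₂] (gauss u))) r = wt ((j₂ : ℝ) / 2 + j₁) u r 0 * P u r 0 := by
  induction j₁ with
  | zero =>
    induction j₂ with
    | zero =>
      refine ⟨_, (Lead.U (contDiffOn_const (c := (1 : ℝ)))).congr fun u hu => by simp,
        fun u r hu hr => ?_⟩
      simp [gauss, wt]
    | succ j ih =>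
      obtain ⟨P, hP, H⟩ := ih
      obtain ⟨P', hP', H'⟩ := hP.sinh_step (κ := 1 / 2) (by norm_num) H
      refine ⟨P', hP'.congr fun u hu => by ring, fun u r hu hr => ?_⟩
      have := H' u r hu hr
      simp only [Function.iterate_zero, id] at this ⊢
      rw [Function.iterate_succ_apply', D2, show r / 2 = 1 / 2 * r by ring, this]
      congr 2
      push_cast
      ring
  | succ j ih =>
    obtain ⟨P, hP, H⟩ := ih
    obtain ⟨P', hP', H'⟩ := hP.sinh_step (κ := 1) (by norm_num) H
    refine ⟨P', hP'.congr fun u hu => by ring, fun u r hu hr => ?_⟩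
    have := H' u r hu hr
    rw [one_mul] at this
    rw [Function.iterate_succ_apply', D1, this]
    congr 2
    push_cast
    ring

/-- The Gaussian absorbs the polynomial growth of a symbol. The constant `C` serves as dominating
function for differentiation under the integral sign against a finite measure. -/
theorem Symb.wt_bound {d : ℕ} {g : ℝ → ℝ → ℝ → ℝ} (hg : Symb d g) {a b β : ℝ} (ha : 0 < a)
    (hβ : 0 ≤ β) :
    ∃ C : ℝ, ∀ u ∈ Set.Icc a b, ∀ r : ℝ, 1 ≤ r → ∀ w : ℝ, 0 ≤ w →
      ‖wt β u r w * g u r w‖ ≤ C := by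
  obtain ⟨C, hC, H⟩ := hg.bound (b := b) ha
  refine ⟨C * d.factorial * Real.exp b, fun u hu r hr w hw => ?_⟩
  have hs : 0 ≤ r + w := by linarith
  have hu0 : 0 < u := lt_of_lt_of_le ha hu.1
  have h1 : Real.exp (-β * r) ≤ 1 := by
    rw [Real.exp_le_one_iff]
    have : 0 ≤ β * r := by positivity
    linarith
  have h2 : (r + w) ^ d ≤ d.factorial * Real.exp (r + w) := by
    have := Real.pow_div_factorial_le_exp _ hs d
    rwa [div_le_iff₀ (by positivity), mul_comm] at this
  -- completing the square: `s - s²/(4u) ≤ u ≤ b`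
  have h3 : Real.exp (-(r + w) ^ 2 / (4 * u)) * Real.exp (r + w) ≤ Real.exp b := by
    rw [← Real.exp_add, Real.exp_le_exp]
    have : -(r + w) ^ 2 / (4 * u) + (r + w) = u - (r + w - 2 * u) ^ 2 / (4 * u) := by
      field_simp; ring
    have h4 : 0 ≤ (r + w - 2 * u) ^ 2 / (4 * u) := by positivity
    linarith [hu.2]
  rw [wt, norm_mul, Real.norm_eq_abs, Real.norm_eq_abs, abs_of_pos (by positivity)]
  calc _ ≤ Real.exp (-(r + w) ^ 2 / (4 * u)) * 1 * (C * (d.factorial * Real.exp (r + w))) := by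
        gcongr
        exact (H u hu r hr w hw).trans (by gcongr)
    _ = C * d.factorial * (Real.exp (-(r + w) ^ 2 / (4 * u)) * Real.exp (r + w)) := by ring
    _ ≤ _ := by gcongr

theorem Symb.wt_measurable {d : ℕ} {g : ℝ → ℝ → ℝ → ℝ} (hg : Symb d g) (β u r : ℝ) :
    Measurable (fun w => wt β u r w * g u r w) := by
  have := hg.measurable u r
  unfold wt
  fun_prop

/-- Superposition over the shifts `w`, with respect to a measure `l`, of the weighted symbol. -/
def supInt (l : Measure ℝ) (β : ℝ) (g : ℝ → ℝ → ℝ → ℝ) (u r : ℝ) : ℝ :=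
  ∫ w, wt β u r w * g u r w ∂l

section supInt

variable {l : Measure ℝ} [IsFiniteMeasure l] {β : ℝ}

theorem supInt_hasDerivAt_r (hl : ∀ᵐ w ∂l, 0 ≤ w) (hβ : 0 ≤ β) {d : ℕ} {A : ℝ → ℝ}
    {g : ℝ → ℝ → ℝ → ℝ} (hg : Lead d A g) :
    ∃ g' : ℝ → ℝ → ℝ → ℝ, Lead (d + 1) (fun u => -1 / 2 / u * A u) g' ∧
      ∀ u r : ℝ, 0 < u → 1 < r →
        HasDerivAt (fun r => supInt l β g u r) (supInt l β g' u r) r := by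
  obtain ⟨g', hg', H⟩ := hg.hasDerivAt_r β
  refine ⟨g', hg', fun u r hu hr => ?_⟩
  obtain ⟨C, hC⟩ := hg.1.wt_bound (b := u) hu hβ
  obtain ⟨C', hC'⟩ := hg'.1.wt_bound (b := u) hu hβ
  refine (hasDerivAt_integral_of_dominated_loc_of_deriv_le (bound := fun _ => C')
    (F := fun x w => wt β u x w * g u x w) (F' := fun x w => wt β u x w * g' u x w)
    (Ioi_mem_nhds hr)
    (Eventually.of_forall fun x => (hg.1.wt_measurable β u x).aestronglyMeasurable)
    (Integrable.of_bound (hg.1.wt_measurable β u r).aestronglyMeasurable C ?_)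
    (hg'.1.wt_measurable β u r).aestronglyMeasurable ?_ (integrable_const _) ?_).2
  · filter_upwards [hl] with w hw using hC u ⟨le_rfl, le_rfl⟩ r hr.le w hw
  · filter_upwards [hl] with w hw x hx using hC' u ⟨le_rfl, le_rfl⟩ x (le_of_lt hx) w hw
  · filter_upwards [hl] with w hw x hx
    exact H u x w hu (lt_trans one_pos hx) hw

theorem supInt_hasDerivAt_u (hl : ∀ᵐ w ∂l, 0 ≤ w) (hβ : 0 ≤ β) {d : ℕ} {A : ℝ → ℝ}
    {g : ℝ → ℝ → ℝ → ℝ} (hg : Lead d A g) :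
    ∃ g' : ℝ → ℝ → ℝ → ℝ, Lead (d + 2) (fun u => 1 / 4 / u / u * A u) g' ∧
      ∀ u r : ℝ, 0 < u → 1 < r →
        HasDerivAt (fun u => supInt l β g u r) (supInt l β g' u r) u := by
  obtain ⟨g', hg', H⟩ := hg.hasDerivAt_u β
  refine ⟨g', hg', fun u r hu hr => ?_⟩
  have h2 : 0 < u / 2 := by positivity
  obtain ⟨C, hC⟩ := hg.1.wt_bound (b := u) hu hβ
  obtain ⟨C', hC'⟩ := hg'.1.wt_bound (b := 2 * u) h2 hβ
  refine (hasDerivAt_integral_of_dominated_loc_of_deriv_le (bound := fun _ => C')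
    (F := fun x w => wt β x r w * g x r w) (F' := fun x w => wt β x r w * g' x r w)
    (s := Set.Icc (u / 2) (2 * u)) (Icc_mem_nhds (by linarith) (by linarith))
    (Eventually.of_forall fun x => (hg.1.wt_measurable β x r).aestronglyMeasurable)
    (Integrable.of_bound (hg.1.wt_measurable β u r).aestronglyMeasurable C ?_)
    (hg'.1.wt_measurable β u r).aestronglyMeasurable ?_ (integrable_const _) ?_).2
  · filter_upwards [hl] with w hw using hC u ⟨le_rfl, le_rfl⟩ r hr.le w hw
  · filter_upwards [hl] with w hw x hx using hC' x hx r hr.le w hw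
  · filter_upwards [hl] with w hw x hx
    exact H x r w (lt_of_lt_of_le h2 hx.1) (by linarith) hw

theorem supInt_iterate_r (hl : ∀ᵐ w ∂l, 0 ≤ w) (hβ : 0 ≤ β) {d : ℕ} {A : ℝ → ℝ}
    {g : ℝ → ℝ → ℝ → ℝ} (hg : Lead d A g) {F : ℝ → ℝ → ℝ}
    (hF : ∀ u r, 0 < u → 1 < r → F u r = supInt l β g u r) (k : ℕ) :
    ∃ g' : ℝ → ℝ → ℝ → ℝ, Lead (d + k) (fun u => (-1 / 2 / u) ^ k * A u) g' ∧
      ∀ u r : ℝ, 0 < u → 1 < r → deriv^[k] (F u) r = supInt l β g' u r := by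
  induction k with
  | zero => exact ⟨g, hg.congr fun u hu => by simp, hF⟩
  | succ k ih =>
    obtain ⟨g₁, hg₁, H₁⟩ := ih
    obtain ⟨g₂, hg₂, H₂⟩ := supInt_hasDerivAt_r hl hβ hg₁
    refine ⟨g₂, hg₂.congr fun u hu => by ring, fun u r hu hr => ?_⟩
    rw [Function.iterate_succ_apply']
    refine HasDerivAt.deriv ((H₂ u r hu hr).congr_of_eventuallyEq ?_)
    filter_upwards [Ioi_mem_nhds hr] with x hx using H₁ u x hu hx

/-- The function `F` stands for a radial derivative of the kernel, already known to be a
superposition for `r > 1`; the time derivatives are then taken at fixed `r`. -/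
theorem supInt_iterate_u (hl : ∀ᵐ w ∂l, 0 ≤ w) (hβ : 0 ≤ β) {d : ℕ} {A : ℝ → ℝ}
    {g : ℝ → ℝ → ℝ → ℝ} (hg : Lead d A g) {F : ℝ → ℝ → ℝ}
    (hF : ∀ u r, 0 < u → 1 < r → F u r = supInt l β g u r) (m : ℕ) :
    ∃ g' : ℝ → ℝ → ℝ → ℝ, Lead (d + 2 * m) (fun u => (1 / 4 / u / u) ^ m * A u) g' ∧
      ∀ u r : ℝ, 0 < u → 1 < r → deriv^[m] (fun v => F v r) u = supInt l β g' u r := by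
  induction m with
  | zero => exact ⟨g, hg.congr fun u hu => by simp, hF⟩
  | succ m ih =>
    obtain ⟨g₁, hg₁, H₁⟩ := ih
    obtain ⟨g₂, hg₂, H₂⟩ := supInt_hasDerivAt_u hl hβ hg₁
    refine ⟨g₂, hg₂.congr fun u hu => by ring, fun u r hu hr => ?_⟩
    rw [Function.iterate_succ_apply']
    refine HasDerivAt.deriv ((H₂ u r hu hr).congr_of_eventuallyEq ?_)
    filter_upwards [Ioi_mem_nhds hu] with x hx using H₁ x r hx hr

end supInt

/-! ### The asymptotics of a superposition, and even `ν` -/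

/-- Bookkeeping of constants: `A` is the leading coefficient of a symbol `g` representing `h_t`,
and `c r^{-σ}` is the total mass, to leading order, of the Laplace kernel `e^{-rw/(2t)}` against
`l`. -/
theorem tendsto_of_supInt (μ ν : ℕ) (t : ℝ) (ht : 0 < t) (m k : ℕ) {l : Measure ℝ}
    [IsFiniteMeasure l] (hl : ∀ᵐ w ∂l, 0 ≤ w) {d : ℕ} {A : ℝ → ℝ} {g : ℝ → ℝ → ℝ → ℝ}
    (hg : Lead d A g)
    (hheat : ∀ u r, 0 < u → 1 < r → heat μ ν u r = supInt l (Qc μ ν / 2) g u r) (σ c : ℝ)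
    (hσ : (d : ℝ) - σ = (μ : ℝ) / 2 + (ν : ℝ) / 2)
    (hc : c * A t = cc μ ν 0 * t ^ (-(1 : ℝ) / 2) * Real.exp (-(Qc μ ν) ^ 2 * t / 4) *
      (t ^ ((μ : ℝ) / 2 + (ν : ℝ) / 2))⁻¹)
    (hlap : ∀ (N : ℕ) (B : ℝ → ℝ) (f : ℝ → ℝ → ℝ → ℝ), Lead N B f →
      Tendsto (fun r => supInt l (Qc μ ν / 2) f t r / wt (Qc μ ν / 2) t r 0 / r ^ N * r ^ σ)
        atTop (𝓝 (c * B t))) :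
    Filter.Tendsto
      (fun r : ℝ =>
        deriv^[m] (fun u => deriv^[k] (heat μ ν u) r) t /
          ((-1 : ℝ) ^ k * cc μ ν (k + 2 * m) * t ^ (-(1 : ℝ) / 2) *
            Real.exp (-(Qc μ ν) ^ 2 * t / 4) * Real.exp (-r ^ 2 / (4 * t)) *
            Real.exp (-(Qc μ ν) / 2 * r) *
            (r / t) ^ ((μ : ℝ) / 2 + (ν : ℝ) / 2 + k + 2 * m)))
      Filter.atTop (nhds 1) := by
  have hQ : 0 ≤ Qc μ ν / 2 := by unfold Qc; positivity
  obtain ⟨g₁, hg₁, H₁⟩ := supInt_iterate_r hl hQ hg hheat k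
  obtain ⟨g₂, hg₂, H₂⟩ := supInt_iterate_u hl hQ hg₁
    (F := fun u r => deriv^[k] (heat μ ν u) r) H₁ m
  set e : ℝ := (μ : ℝ) / 2 + (ν : ℝ) / 2 with he
  set K : ℝ := (-1 : ℝ) ^ k * cc μ ν (k + 2 * m) * t ^ (-(1 : ℝ) / 2) *
            Real.exp (-(Qc μ ν) ^ 2 * t / 4) * (t ^ (e + k + 2 * m))⁻¹ with hK
  have hccpos : ∀ j, 0 < cc μ ν j := fun j => by unfold cc; positivity
  have hcc : cc μ ν (k + 2 * m) = cc μ ν 0 * ((1 / 2) ^ k * (1 / 4) ^ m) := by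
    have : (2 : ℝ) ^ (-(μ : ℝ) - (ν : ℝ) / 2 - 1 - ((k + 2 * m : ℕ) : ℝ)) =
        (2 : ℝ) ^ (-(μ : ℝ) - (ν : ℝ) / 2 - 1 - ((0 : ℕ) : ℝ)) * ((1 / 2) ^ k * (1 / 4) ^ m) := by
      rw [show -(μ : ℝ) - (ν : ℝ) / 2 - 1 - ((k + 2 * m : ℕ) : ℝ) =
        (-(μ : ℝ) - (ν : ℝ) / 2 - 1 - ((0 : ℕ) : ℝ)) - ((k + 2 * m : ℕ) : ℝ) by
          push_cast; ring, Real.rpow_sub two_pos, Real.rpow_natCast, pow_add, pow_mul,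
        div_eq_mul_inv, mul_inv, ← inv_pow, ← inv_pow]
      norm_num
    unfold cc
    rw [this]
    ring
  have htp : t ^ (e + k + 2 * m) = t ^ e * (t ^ k * (t ^ m * t ^ m)) := by
    rw [show e + k + 2 * m = e + (k : ℝ) + (m : ℝ) + (m : ℝ) by ring, Real.rpow_add ht,
      Real.rpow_add ht, Real.rpow_add ht, Real.rpow_natCast, Real.rpow_natCast]
    ring
  have hK0 : K ≠ 0 := by
    have := hccpos (k + 2 * m)
    rw [hK]
    have h1 : (-1 : ℝ) ^ k ≠ 0 := pow_ne_zero _ (by norm_num)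
    positivity
  have hKA : c * ((1 / 4 / t / t) ^ m * ((-1 / 2 / t) ^ k * A t)) = K := by
    rw [show c * ((1 / 4 / t / t) ^ m * ((-1 / 2 / t) ^ k * A t)) =
      (1 / 4 / t / t) ^ m * (-1 / 2 / t) ^ k * (c * A t) by ring, hc, hK, hcc, htp]
    simp only [div_pow, one_pow, mul_inv]
    ring
  have hlim := (hlap _ _ _ hg₂).div_const K
  rw [hKA, div_self hK0] at hlim
  refine hlim.congr' ?_
  filter_upwards [eventually_gt_atTop 1] with r hr
  have hr0 : 0 < r := by linarith
  rw [H₂ t r ht hr, Real.div_rpow hr0.le ht.le]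
  have hrp : r ^ (e + k + 2 * m) * r ^ σ = r ^ (d + k + 2 * m) := by
    rw [← Real.rpow_natCast r (d + k + 2 * m), ← Real.rpow_add hr0]
    congr 1
    push_cast
    linarith
  rw [← hrp, hK, wt]
  have h1 : r ^ (e + k + 2 * m) ≠ 0 := (Real.rpow_pos_of_pos hr0 _).ne'
  have h2 : r ^ σ ≠ 0 := (Real.rpow_pos_of_pos hr0 _).ne'
  have h3 : t ^ (e + k + 2 * m) ≠ 0 := (Real.rpow_pos_of_pos ht _).ne'
  have h4 : (-1 : ℝ) ^ k ≠ 0 := pow_ne_zero _ (by norm_num)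
  have h5 := (hccpos (k + 2 * m)).ne'
  rw [add_zero, show -(Qc μ ν) / 2 * r = -(Qc μ ν / 2) * r by ring]
  field_simp

theorem contDiffOn_prefactor (c q : ℝ) :
    ContDiffOn ℝ (⊤ : ℕ∞)
      (fun u : ℝ => c * u ^ (-(1 : ℝ) / 2) * Real.exp (-q ^ 2 * u / 4)) (Set.Ioi 0) := by
  have h1 : ContDiffOn ℝ (⊤ : ℕ∞) (fun u : ℝ => u ^ (-(1 : ℝ) / 2)) (Set.Ioi 0) :=
    contDiffOn_id.rpow_const_of_ne fun u hu => (Set.mem_Ioi.1 hu).ne'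
  have h2 : ContDiff ℝ (⊤ : ℕ∞) (fun u : ℝ => Real.exp (-q ^ 2 * u / 4)) := by fun_prop
  exact (contDiffOn_const.mul h1).mul h2.contDiffOn

/-- For even `ν` the kernel is a single weighted symbol, that is, the superposition with respect to
the Dirac mass at `0`. -/
theorem asymptotics_even (μ ν : ℕ) (hμ : Even μ) (hν : Even ν) (t : ℝ) (ht : 0 < t) (m k : ℕ) :
    Filter.Tendsto
      (fun r : ℝ =>
        deriv^[m] (fun u => deriv^[k] (heat μ ν u) r) t /
          ((-1 : ℝ) ^ k * cc μ ν (k + 2 * m) * t ^ (-(1 : ℝ) / 2) *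
            Real.exp (-(Qc μ ν) ^ 2 * t / 4) * Real.exp (-r ^ 2 / (4 * t)) *
            Real.exp (-(Qc μ ν) / 2 * r) *
            (r / t) ^ ((μ : ℝ) / 2 + (ν : ℝ) / 2 + k + 2 * m)))
      Filter.atTop (nhds 1) := by
  have hμ2 : ((μ / 2 : ℕ) : ℝ) = (μ : ℝ) / 2 := Nat.cast_div hμ.two_dvd (by norm_num)
  have hν2 : ((ν / 2 : ℕ) : ℝ) = (ν : ℝ) / 2 := Nat.cast_div hν.two_dvd (by norm_num)
  obtain ⟨P, hP, H⟩ := exists_lead_iterate (ν / 2) (μ / 2)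
  have hb : ((μ / 2 : ℕ) : ℝ) / 2 + ((ν / 2 : ℕ) : ℝ) = Qc μ ν / 2 := by
    rw [hμ2, hν2, Qc]; ring
  rw [hb] at H
  refine tendsto_of_supInt μ ν t ht m k (l := Measure.dirac 0) (by simp)
    (hP.umul (contDiffOn_prefactor (cc μ ν 0) (Qc μ ν))) (fun u r hu hr => ?_) 0 1 ?_ ?_ ?_
  · rw [supInt, integral_dirac, heat, if_pos hν, H u r hu (by linarith)]
    ring
  · push_cast [hμ2, hν2]; ring
  · rw [one_mul, ← hμ2, ← hν2, ← Nat.cast_add, Real.rpow_natCast, one_div, inv_pow]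
  · intro N B f hf
    have h1 : Tendsto (fun r : ℝ => (r, (0 : ℝ))) atTop unifAtTop :=
      tendsto_id.prodMk (tendsto_principal.2 (by simp))
    rw [one_mul]
    refine ((hf.2 t ht).comp h1).congr fun r => ?_
    have : wt (Qc μ ν / 2) t r 0 ≠ 0 := by unfold wt; positivity
    rw [supInt, integral_dirac, Real.rpow_zero]
    simp only [Function.comp_apply, add_zero]
    field_simp

/-! ### Laplace asymptotics of the singular kernel -/

/-- The density in `w` of the superposition for odd `ν`: what is left of the singular kernel
`sinh s / √(cosh s - cosh r)`, `s = r + w`, after factoring out a symbol of degree zero. -/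
def rho (γ w : ℝ) : ℝ := Real.exp (γ * w) / Real.sqrt (Real.sinh (w / 2))

theorem rho_nonneg (γ w : ℝ) : 0 ≤ rho γ w := by unfold rho; positivity

theorem rho_measurable (γ : ℝ) : Measurable (rho γ) := by unfold rho; fun_prop

theorem rho_le {γ w : ℝ} (hw : 0 < w) :
    rho γ w ≤ Real.exp (γ * w) / Real.sqrt (w / 2) := by
  have h2 : 0 < w / 2 := by positivity
  unfold rho
  gcongr
  exact Real.self_le_sinh_iff.2 h2.le

theorem one_div_sqrt_half {v : ℝ} (hv : 0 < v) :
    1 / Real.sqrt (v / 2) = Real.sqrt 2 * v ^ ((1 : ℝ) / 2 - 1) := by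
  rw [Real.sqrt_div hv.le, show (1 : ℝ) / 2 - 1 = -(1 / 2) by norm_num, Real.rpow_neg hv.le,
    ← Real.sqrt_eq_rpow]
  field_simp

theorem integrableOn_sqrt_exp {b : ℝ} (hb : 0 < b) :
    IntegrableOn (fun v : ℝ => 1 / Real.sqrt (v / 2) * Real.exp (-(b * v))) (Set.Ioi 0) := by
  have h := (integrableOn_rpow_mul_exp_neg_mul_rpow (s := (1 : ℝ) / 2 - 1) (p := 1) (b := b)
    (by norm_num) one_pos hb).const_mul (Real.sqrt 2)
  refine IntegrableOn.congr_fun h (fun v hv => ?_) measurableSet_Ioi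
  simp only [one_div_sqrt_half hv, Real.rpow_one]
  ring_nf

theorem integral_sqrt_exp {t : ℝ} (ht : 0 < t) :
    ∫ v in Set.Ioi (0 : ℝ), 1 / Real.sqrt (v / 2) * Real.exp (-(1 / (2 * t) * v)) =
      2 * Real.sqrt (π * t) := by
  have h := Real.integral_rpow_mul_exp_neg_mul_Ioi (a := 1 / 2) (r := 1 / (2 * t))
    (by norm_num) (by positivity)
  calc _ = ∫ v in Set.Ioi (0 : ℝ),
        Real.sqrt 2 * (v ^ ((1 : ℝ) / 2 - 1) * Real.exp (-(1 / (2 * t) * v))) := by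
        refine setIntegral_congr_fun measurableSet_Ioi fun v hv => ?_
        simp only [one_div_sqrt_half hv]
        ring
    _ = _ := by
      rw [integral_const_mul, h, Real.Gamma_one_half_eq, one_div_one_div, ← Real.sqrt_eq_rpow,
        Real.sqrt_mul zero_le_two, Real.sqrt_mul Real.pi_pos.le, ← mul_assoc, ← mul_assoc,
        Real.mul_self_sqrt zero_le_two]
      ring

/-- The measure `rho γ w dw` on the half-line. -/
def rhoMeasure (γ : ℝ) : Measure ℝ :=
  (volume.restrict (Set.Ioi 0)).withDensity fun w => ENNReal.ofReal (rho γ w)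

theorem rhoMeasure_isFinite {γ : ℝ} (hγ : γ < 0) : IsFiniteMeasure (rhoMeasure γ) := by
  refine isFiniteMeasure_withDensity_ofReal (Integrable.hasFiniteIntegral ?_)
  refine Integrable.mono' (integrableOn_sqrt_exp (neg_pos.2 hγ))
    (rho_measurable γ).aestronglyMeasurable ?_
  filter_upwards [ae_restrict_mem measurableSet_Ioi] with w hw
  rw [Real.norm_eq_abs, abs_of_nonneg (rho_nonneg γ w)]
  refine (rho_le hw).trans (le_of_eq ?_)
  rw [show -(-γ * w) = γ * w by ring]
  ring

theorem ae_rhoMeasure (γ : ℝ) : ∀ᵐ w ∂(rhoMeasure γ), 0 ≤ w := by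
  refine (withDensity_absolutelyContinuous _ _).ae_le ?_
  filter_upwards [ae_restrict_mem measurableSet_Ioi] with w hw using le_of_lt hw

theorem integral_rhoMeasure (γ : ℝ) (f : ℝ → ℝ) :
    ∫ w, f w ∂(rhoMeasure γ) = ∫ w in Set.Ioi 0, rho γ w * f w := by
  rw [rhoMeasure, integral_withDensity_eq_integral_toReal_smul
    (rho_measurable γ).ennreal_ofReal (by simp)]
  simp [ENNReal.toReal_ofReal (rho_nonneg γ _)]

/-- The `w^{-1/2}` singularity of `rho` at the origin, rescaled by `w = v/r`. -/
theorem tendsto_rho {v : ℝ} (hv : 0 < v) (γ : ℝ) :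
    Tendsto (fun r : ℝ => rho γ (v / r) / Real.sqrt r) atTop (𝓝 (1 / Real.sqrt (v / 2))) := by
  have h1 : Tendsto (fun r : ℝ => Real.exp (γ * (v / r))) atTop (𝓝 1) := by
    have : Tendsto (fun r : ℝ => γ * (v / r)) atTop (𝓝 0) := by
      simpa using (tendsto_const_nhds.div_atTop tendsto_id :
        Tendsto (fun r : ℝ => v / r) atTop (𝓝 0)).const_mul γ
    simpa [Function.comp_def] using (Real.continuous_exp.tendsto 0).comp this
  have h2 : Tendsto (fun r : ℝ => Real.sinh (v / r / 2) * r) atTop (𝓝 (v / 2)) := by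
    have hs : Tendsto (fun x : ℝ => x⁻¹ * Real.sinh x) (𝓝[≠] 0) (𝓝 1) := by
      simpa [hasDerivAt_iff_tendsto_slope_zero] using Real.hasDerivAt_sinh 0
    have hx : Tendsto (fun r : ℝ => v / r / 2) atTop (𝓝[≠] 0) := by
      refine tendsto_nhdsWithin_iff.2 ⟨?_, ?_⟩
      · simpa using (tendsto_const_nhds.div_atTop tendsto_id :
          Tendsto (fun r : ℝ => v / r) atTop (𝓝 0)).div_const 2
      · filter_upwards [eventually_gt_atTop 0] with r hr
        exact (by positivity : v / r / 2 ≠ 0)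
    have := (hs.comp hx).mul_const (v / 2)
    rw [one_mul] at this
    refine this.congr' ?_
    filter_upwards [eventually_gt_atTop 0] with r hr
    simp only [Function.comp_apply]
    field_simp
  have h3 := h1.div (h2.sqrt) (by positivity)
  refine h3.congr' ?_
  filter_upwards [eventually_gt_atTop 0] with r hr
  have : 0 ≤ Real.sinh (v / r / 2) := Real.sinh_nonneg_iff.2 (by positivity)
  simp only [Pi.div_apply]
  rw [rho, Real.sqrt_mul this]
  exact (div_div _ _ _).symm

/-- Watson's lemma in the form needed here: on the scale `w = v/r` the weight becomes
`e^{-v/(2t)}`, so that the integral concentrates at `w = 0`. -/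
theorem tendsto_laplace_rho {γ : ℝ} (hγ : γ ≤ 0) {t : ℝ} (ht : 0 < t) (β : ℝ) {N : ℕ}
    {B : ℝ → ℝ} {f : ℝ → ℝ → ℝ → ℝ} (hf : Lead N B f) :
    Tendsto (fun r => supInt (rhoMeasure γ) β f t r / wt β t r 0 / r ^ N * r ^ ((1 : ℝ) / 2))
      atTop (𝓝 (2 * Real.sqrt (π * t) * B t)) := by
  set G : ℝ → ℝ → ℝ := fun r v => rho γ (v / r) / Real.sqrt r *
    (Real.exp (-(1 / (2 * t) * v)) * Real.exp (-(v / r) ^ 2 / (4 * t)) *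
      (f t r (v / r) / r ^ N)) with hG
  have key : ∀ r : ℝ, 0 < r →
      supInt (rhoMeasure γ) β f t r / wt β t r 0 / r ^ N * r ^ ((1 : ℝ) / 2) =
        ∫ v in Set.Ioi (0 : ℝ), G r v := by
    intro r hr
    have hsub := integral_comp_mul_left_Ioi
      (fun w => rho γ w * (wt β t r w * f t r w)) 0 (inv_pos.2 hr)
    rw [mul_zero, inv_inv, smul_eq_mul] at hsub
    rw [supInt, integral_rhoMeasure, ← Real.sqrt_eq_rpow]
    have h1 : ∀ v, G r v = (1 / Real.sqrt r / wt β t r 0 / r ^ N) *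
        (rho γ (r⁻¹ * v) * (wt β t r (r⁻¹ * v) * f t r (r⁻¹ * v))) := by
      intro v
      have h2 : wt β t r (r⁻¹ * v) = wt β t r 0 *
          (Real.exp (-(1 / (2 * t) * v)) * Real.exp (-(v / r) ^ 2 / (4 * t))) := by
        have e1 : -(r + r⁻¹ * v) ^ 2 / (4 * t) =
            -(r + 0) ^ 2 / (4 * t) + -(1 / (2 * t) * v) + -(v / r) ^ 2 / (4 * t) := by
          field_simp
          ring
        unfold wt
        rw [e1, Real.exp_add, Real.exp_add]
        ring
      have h3 : wt β t r 0 ≠ 0 := by unfold wt; positivity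
      rw [h2, hG, show v / r = r⁻¹ * v by rw [div_eq_inv_mul]]
      field_simp
    simp only [h1]
    rw [integral_const_mul, hsub]
    generalize (∫ w in Set.Ioi (0 : ℝ), rho γ w * (wt β t r w * f t r w)) = I
    generalize wt β t r 0 = W
    rw [show 1 / Real.sqrt r / W / r ^ N * (r * I) = I / W / r ^ N * (r / Real.sqrt r) by ring,
      Real.div_sqrt]
  have hval : ∫ v in Set.Ioi (0 : ℝ),
      1 / Real.sqrt (v / 2) * Real.exp (-(1 / (2 * t) * v)) * B t =
        2 * Real.sqrt (π * t) * B t := by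
    rw [integral_mul_const, integral_sqrt_exp ht]
  rw [← hval]
  refine Tendsto.congr' (f₁ := fun r => ∫ v in Set.Ioi (0 : ℝ), G r v) ?_ ?_
  · filter_upwards [eventually_gt_atTop 0] with r hr using (key r hr).symm
  -- Domination for `r ≥ 1`: the growth `(1+v)^N` is absorbed by half of the decay `e^{-v/(2t)}`.
  obtain ⟨C, hC, HC⟩ := hf.1.bound (b := t) ht
  set δ : ℝ := 1 / (4 * t) with hδ
  have hδ0 : 0 < δ := by positivity
  refine tendsto_integral_filter_of_dominated_convergence
    (fun v => C * N.factorial / δ ^ N * Real.exp δ *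
      (1 / Real.sqrt (v / 2) * Real.exp (-(δ * v)))) ?_ ?_
    ((integrableOn_sqrt_exp hδ0).const_mul _) ?_
  · refine Eventually.of_forall fun r => Measurable.aestronglyMeasurable ?_
    have h1 : Measurable fun v => f t r (v / r) :=
      (hf.1.measurable t r).comp (measurable_id.div_const r)
    have h2 : Measurable fun v => rho γ (v / r) :=
      (rho_measurable γ).comp (measurable_id.div_const r)
    exact (h2.div_const _).mul (Measurable.mul (by fun_prop) (h1.div_const _))
  · filter_upwards [eventually_ge_atTop 1] with r hr
    have hr0 : 0 < r := by linarith
    filter_upwards [ae_restrict_mem measurableSet_Ioi] with v hv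
    have hv0 : 0 < v := hv
    have hvr : 0 < v / r := by positivity
    have b1 : rho γ (v / r) / Real.sqrt r ≤ 1 / Real.sqrt (v / 2) := by
      have h1 : Real.exp (γ * (v / r)) ≤ 1 := by
        rw [Real.exp_le_one_iff]
        exact mul_nonpos_of_nonpos_of_nonneg hγ hvr.le
      calc _ ≤ Real.exp (γ * (v / r)) / Real.sqrt (v / r / 2) / Real.sqrt r := by
            gcongr
            exact rho_le hvr
        _ ≤ 1 / Real.sqrt (v / r / 2) / Real.sqrt r := by gcongr
        _ = 1 / Real.sqrt (v / 2) := by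
            rw [div_div, ← Real.sqrt_mul (by positivity)]
            congr 2
            field_simp
    have b2 : Real.exp (-(v / r) ^ 2 / (4 * t)) ≤ 1 := by
      rw [Real.exp_le_one_iff]
      exact div_nonpos_of_nonpos_of_nonneg (neg_nonpos.2 (sq_nonneg _)) (by positivity)
    have b3 : |f t r (v / r)| / r ^ N ≤ C * (1 + v) ^ N := by
      rw [div_le_iff₀ (by positivity)]
      refine (HC t ⟨le_rfl, le_rfl⟩ r hr (v / r) hvr.le).trans ?_
      rw [mul_assoc, ← mul_pow]
      have : v / r ≤ v * r := by
        rw [div_le_iff₀ hr0]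
        have : 1 ≤ r * r := by nlinarith
        nlinarith
      gcongr
      linarith
    have b4 : (1 + v) ^ N ≤ N.factorial / δ ^ N * (Real.exp δ * Real.exp (δ * v)) := by
      have := Real.pow_div_factorial_le_exp (δ * (1 + v)) (by positivity) N
      rw [mul_pow, mul_add, mul_one, Real.exp_add, div_le_iff₀ (by positivity)] at this
      rw [div_mul_eq_mul_div, le_div_iff₀ (by positivity)]
      linarith
    have b5 : Real.exp (-(1 / (2 * t) * v)) * Real.exp (δ * v) = Real.exp (-(δ * v)) := by
      rw [← Real.exp_add, hδ]
      congr 1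
      field_simp
      ring
    have n1 : 0 ≤ rho γ (v / r) / Real.sqrt r := div_nonneg (rho_nonneg _ _) (Real.sqrt_nonneg _)
    rw [hG]
    simp only [norm_mul, norm_div, norm_pow, Real.norm_eq_abs, Real.abs_exp, abs_of_pos hr0,
      abs_of_nonneg (rho_nonneg γ (v / r)), abs_of_nonneg (Real.sqrt_nonneg r)]
    calc _ ≤ 1 / Real.sqrt (v / 2) * (Real.exp (-(1 / (2 * t) * v)) * 1 *
          (C * (N.factorial / δ ^ N * (Real.exp δ * Real.exp (δ * v))))) := by
          gcongr
          exact b3.trans (by gcongr)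
      _ = C * N.factorial / δ ^ N * Real.exp δ * (1 / Real.sqrt (v / 2) *
          (Real.exp (-(1 / (2 * t) * v)) * Real.exp (δ * v))) := by ring
      _ = _ := by rw [b5]
  · filter_upwards [ae_restrict_mem measurableSet_Ioi] with v hv
    have hv0 : 0 < v := hv
    have hvr : Tendsto (fun r : ℝ => v / r) atTop (𝓝 0) :=
      tendsto_const_nhds.div_atTop tendsto_id
    have l1 : Tendsto (fun r : ℝ => Real.exp (-(v / r) ^ 2 / (4 * t))) atTop (𝓝 1) := by
      have : Tendsto (fun r : ℝ => -(v / r) ^ 2 / (4 * t)) atTop (𝓝 0) := by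
        simpa using ((hvr.pow 2).neg).div_const (4 * t)
      simpa [Function.comp_def] using (Real.continuous_exp.tendsto 0).comp this
    have l2 : Tendsto (fun r : ℝ => (r, v / r)) atTop unifAtTop := by
      refine tendsto_id.prodMk (tendsto_principal.2 ?_)
      filter_upwards [eventually_gt_atTop 0] with r hr
      exact (by positivity : 0 ≤ v / r)
    have l3 : Tendsto (fun r : ℝ => ((r + v / r) / r) ^ N) atTop (𝓝 1) := by
      have : Tendsto (fun r : ℝ => 1 + v / r * r⁻¹) atTop (𝓝 1) := by
        simpa using (hvr.mul tendsto_inv_atTop_zero).const_add 1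
      have h2 := this.pow N
      rw [one_pow] at h2
      refine h2.congr' ?_
      filter_upwards [eventually_gt_atTop 0] with r hr
      congr 1
      field_simp
    have l4 : Tendsto (fun r : ℝ => f t r (v / r) / r ^ N) atTop (𝓝 (B t)) := by
      have := ((hf.2 t ht).comp l2).mul l3
      rw [mul_one] at this
      refine this.congr' ?_
      filter_upwards [eventually_gt_atTop 0] with r hr
      have : r + v / r ≠ 0 := by positivity
      simp only [Function.comp_apply, div_pow]
      field_simp
    have := (tendsto_rho hv0 γ).mul ((l1.const_mul (Real.exp (-(1 / (2 * t) * v)))).mul l4)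
    convert! this using 2
    ring

/-! ### Odd `ν` -/

/-- The singular kernel of the odd case, written with `s = r + w`. -/
theorem abel_kernel_eq {r w : ℝ} (hr : 0 < r) (hw : 0 < w) :
    Real.sinh (r + w) / Real.sqrt (Real.cosh (r + w) - Real.cosh r) =
      1 / 2 * Real.exp (r / 2 + 3 / 4 * w) * (1 - Real.exp (-(2 * r + 2 * w))) *
        (1 - Real.exp (-(2 * r + w))) ^ (-(1 : ℝ) / 2) / Real.sqrt (Real.sinh (w / 2)) := by
  have hx : 0 < 1 - Real.exp (-(2 * r + w)) := by
    rw [sub_pos, Real.exp_lt_one_iff]; linarith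
  have hs : 0 < Real.sinh (w / 2) := Real.sinh_pos_iff.2 (by positivity)
  have h1 : Real.cosh (r + w) - Real.cosh r =
      Real.exp (r + w / 2) * ((1 - Real.exp (-(2 * r + w))) * Real.sinh (w / 2)) := by
    have e : Real.exp (r + w / 2) * (1 - Real.exp (-(2 * r + w))) = 2 * Real.sinh (r + w / 2) := by
      rw [Real.sinh_eq, mul_sub, ← Real.exp_add]
      ring_nf
    rw [← mul_assoc, e, show r + w = (r + w / 2) + w / 2 by ring,
      show Real.cosh r = Real.cosh ((r + w / 2) - w / 2) by ring_nf, Real.cosh_add, Real.cosh_sub]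
    ring
  have h2 : Real.sinh (r + w) =
      1 / 2 * Real.exp (r + w) * (1 - Real.exp (-(2 * r + 2 * w))) := by
    rw [mul_assoc, mul_sub, ← Real.exp_add, Real.sinh_eq]
    ring_nf
  have h3 : Real.exp (r + w) =
      Real.exp (r / 2 + 3 / 4 * w) * Real.sqrt (Real.exp (r + w / 2)) := by
    rw [← Real.exp_half, ← Real.exp_add]
    ring_nf
  have h4 : 0 < Real.sqrt (Real.exp (r + w / 2)) := by positivity
  rw [h1, h2, h3, Real.sqrt_mul (Real.exp_pos _).le, Real.sqrt_mul hx.le,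
    show -(1 : ℝ) / 2 = -(1 / 2) by ring, Real.rpow_neg hx.le, ← Real.sqrt_eq_rpow]
  have h5 := Real.sqrt_pos.2 hx
  have h6 := Real.sqrt_pos.2 hs
  field_simp

theorem setIntegral_Ioi_shift (f : ℝ → ℝ) (r : ℝ) :
    ∫ s in Set.Ioi r, f s = ∫ w in Set.Ioi (0 : ℝ), f (r + w) := by
  have h := (measurePreserving_add_left volume r).setIntegral_preimage_emb
    (measurableEmbedding_addLeft r) f (Set.Ioi r)
  rw [← h]
  simp

/-- For odd `ν` the substitution `s = r + w` turns the integral into a superposition with respect to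
`rhoMeasure`. Its Laplace asymptotics lower the degree `μ/2 + (ν+1)/2` by `1/2`. -/
theorem asymptotics_odd (μ ν : ℕ) (hμ : Even μ) (hν : ¬Even ν) (t : ℝ) (ht : 0 < t) (m k : ℕ) :
    Filter.Tendsto
      (fun r : ℝ =>
        deriv^[m] (fun u => deriv^[k] (heat μ ν u) r) t /
          ((-1 : ℝ) ^ k * cc μ ν (k + 2 * m) * t ^ (-(1 : ℝ) / 2) *
            Real.exp (-(Qc μ ν) ^ 2 * t / 4) * Real.exp (-r ^ 2 / (4 * t)) *
            Real.exp (-(Qc μ ν) / 2 * r) *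
            (r / t) ^ ((μ : ℝ) / 2 + (ν : ℝ) / 2 + k + 2 * m)))
      Filter.atTop (nhds 1) := by
  have hodd : Odd ν := Nat.not_even_iff_odd.1 hν
  have hμ2 : ((μ / 2 : ℕ) : ℝ) = (μ : ℝ) / 2 := Nat.cast_div hμ.two_dvd (by norm_num)
  have hν2 : (((ν + 1) / 2 : ℕ) : ℝ) = ((ν : ℝ) + 1) / 2 := by
    rw [Nat.cast_div (hodd.add_one).two_dvd (by norm_num)]; push_cast; ring
  have hν1 : (1 : ℝ) ≤ ν := by exact_mod_cast hodd.pos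
  obtain ⟨P, hP, H⟩ := exists_lead_iterate ((ν + 1) / 2) (μ / 2)
  set b : ℝ := ((μ / 2 : ℕ) : ℝ) / 2 + (((ν + 1) / 2 : ℕ) : ℝ) with hb
  have hbQ : b = Qc μ ν / 2 + 1 / 2 := by
    rw [hb, hμ2, hν2, Qc]; ring
  -- The rate in `w` is `3/4` from the kernel `sinh s / √(cosh s - cosh r)` and `-b` from the
  -- `e^{-bs}` of the differentiated Gaussian.
  have hγ : 3 / 4 - b < 0 := by
    have : (0 : ℝ) ≤ ((μ / 2 : ℕ) : ℝ) / 2 := by positivity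
    rw [hb, hν2]
    linarith
  have := rhoMeasure_isFinite hγ
  have hY := (Lead.Y 2 2 1 two_pos zero_le_two).mul0
    ((Lead.Y 2 1 (-(1 : ℝ) / 2) two_pos zero_le_one).mul0 hP.shift)
  have hL := hY.umul (contDiffOn_const.mul
    (contDiffOn_prefactor (cc μ ν 0 * π ^ (-(1 : ℝ) / 2)) (Qc μ ν)) (f := fun _ => 1 / 2))
  refine tendsto_of_supInt μ ν t ht m k (l := rhoMeasure (3 / 4 - b)) (ae_rhoMeasure _)
    hL (fun u r hu hr => ?_) (1 / 2) (2 * Real.sqrt (π * t)) ?_ ?_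
    (fun N B f hf => tendsto_laplace_rho hγ.le ht (Qc μ ν / 2) hf)
  · have hr0 : 0 < r := by linarith
    rw [heat, if_neg hν, supInt, integral_rhoMeasure, setIntegral_Ioi_shift, ← integral_const_mul]
    refine setIntegral_congr_fun measurableSet_Ioi fun w hw => ?_
    have hw0 : 0 < w := hw
    have he : Real.exp (r / 2 + 3 / 4 * w) * Real.exp (-b * (r + w)) =
        Real.exp ((3 / 4 - b) * w) * Real.exp (-(Qc μ ν / 2) * r) := by
      rw [← Real.exp_add, ← Real.exp_add, hbQ]
      ring_nf
    simp only [abel_kernel_eq hr0 hw0, H u (r + w) hu (by positivity), wt, rho, add_zero,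
      Real.rpow_one, one_mul]
    linear_combination (cc μ ν 0 * π ^ (-(1 : ℝ) / 2) * u ^ (-(1 : ℝ) / 2) *
      Real.exp (-(Qc μ ν) ^ 2 * u / 4) * (1 / 2) * (1 - Real.exp (-(2 * r + 2 * w))) *
        (1 - Real.exp (-(2 * r + w))) ^ (-(1 : ℝ) / 2) / Real.sqrt (Real.sinh (w / 2)) *
        Real.exp (-(r + w) ^ 2 / (4 * u)) * P u (r + w) 0) * he
  · push_cast [hμ2, hν2]; ring
  · have hπ : Real.sqrt (π * t) * π ^ (-(1 : ℝ) / 2) = t ^ ((1 : ℝ) / 2) := by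
      have h0 : Real.sqrt π ≠ 0 := (Real.sqrt_pos.2 Real.pi_pos).ne'
      rw [Real.sqrt_mul Real.pi_pos.le, show -(1 : ℝ) / 2 = -(1 / 2) by ring,
        Real.rpow_neg Real.pi_pos.le, ← Real.sqrt_eq_rpow, ← Real.sqrt_eq_rpow]
      field_simp
    have ht2 : (1 / t) ^ (μ / 2 + (ν + 1) / 2) * t ^ ((1 : ℝ) / 2) =
        (t ^ ((μ : ℝ) / 2 + (ν : ℝ) / 2))⁻¹ := by
      rw [one_div, inv_pow, ← Real.rpow_natCast, ← Real.rpow_neg ht.le, ← Real.rpow_neg ht.le,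
        ← Real.rpow_add ht]
      congr 1
      push_cast [hμ2, hν2]
      ring
    rw [← ht2, ← hπ]
    ring

theorem time_radial_derivative_asymptotics_at_infinity (μ ν : ℕ) (hμ : Even μ)
    (hν : 1 ≤ ν) (t : ℝ) (ht : 0 < t) (m k : ℕ) :
    Filter.Tendsto
      (fun r : ℝ =>
        deriv^[m] (fun u => deriv^[k] (heat μ ν u) r) t /
          ((-1 : ℝ) ^ k * cc μ ν (k + 2 * m) * t ^ (-(1 : ℝ) / 2) *
            Real.exp (-(Qc μ ν) ^ 2 * t / 4) * Real.exp (-r ^ 2 / (4 * t)) *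
            Real.exp (-(Qc μ ν) / 2 * r) *
            (r / t) ^ ((μ : ℝ) / 2 + (ν : ℝ) / 2 + k + 2 * m)))
      Filter.atTop (nhds 1) := by
  by_cases h : Even ν
  · exact asymptotics_even μ ν hμ h t ht m k
  · exact asymptotics_odd μ ν hμ h t ht m k

end DR
end
end
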